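/- Let R be a commutative Noetherian ring, 𝔞 a proper ideal of R, t ≥ 0 an integer, and M an R-module such that Ext^i_R(R/𝔞, M) is a finitely generated R-module for every i ≥ 0. If H^i_𝔞(M) belongs to FD_{≤1} for every integer 0 ≤ i < t (in particular, if dim_R H^i_𝔞(M) ≤ 1 for all i < t, or if dim R = 2), then H^i_𝔞(M) is 𝔞-cofinite for every 0 ≤ i < t and the R-modules Hom_R(R/𝔞, H^t_𝔞(M)) and Ext^1_R(R/𝔞, H^t_𝔞(M)) are finitely generated. -/

import Mathlib

open CategoryTheory

universe u

/-- The `R`-module `Ext^i_R(N, M)` for two `R`-modules (objects of `ModuleCat R`). -/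
noncomputable def extObj {R : Type u} [CommRing R] (N M : ModuleCat.{u} R) (i : ℕ) :
    ModuleCat.{u} R :=
  ((Ext R (ModuleCat.{u} R) i).obj (Opposite.op N)).obj M

/-- The `R`-module `Ext^i_R(R/𝔞, M)`. -/
noncomputable def extIdeal {R : Type u} [CommRing R] (𝔞 : Ideal R) (i : ℕ)
    (M : ModuleCat.{u} R) : ModuleCat.{u} R :=
  extObj (ModuleCat.of R (R ⧸ 𝔞)) M i

/-- An `R`-module `M` is `𝔞`-cofinite if `Supp_R M ⊆ V(𝔞)` and `Ext^i_R(R/𝔞, M)` is a finitely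
generated `R`-module for every `i ≥ 0`. -/
def IsCofinite {R : Type u} [CommRing R] (𝔞 : Ideal R) (M : ModuleCat.{u} R) : Prop :=
  Module.support R M ⊆ PrimeSpectrum.zeroLocus (𝔞 : Set R) ∧
    ∀ i : ℕ, Module.Finite R (extIdeal 𝔞 i M)

/-- The Krull dimension `dim_R M` of an `R`-module `M`: the Krull dimension of its support,
i.e. the supremum of `dim R/𝔭` over primes `𝔭` in the support of `M`. -/
noncomputable def moduleDim (R : Type u) [CommRing R] (M : Type u) [AddCommGroup M]
    [Module R M] : WithBot ℕ∞ :=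
  Order.krullDim (Module.support R M)

/-- An `R`-module `M` is in `FD_{≤n}` if there is a finitely generated submodule `N ⊆ M`
with `dim_R (M/N) ≤ n`. -/
def MemFD (R : Type u) [CommRing R] (n : ℕ) (M : Type u) [AddCommGroup M] [Module R M] : Prop :=
  ∃ N : Submodule R M, N.FG ∧ moduleDim R (M ⧸ N) ≤ (n : WithBot ℕ∞)

/-- An `R`-module `M` is `𝔞`-torsion if every element is annihilated by some power of `𝔞`. -/
def IsTorsionIdeal {R : Type u} [CommRing R] (𝔞 : Ideal R) (M : Type u) [AddCommGroup M]
    [Module R M] : Prop :=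
  ∀ m : M, ∃ n : ℕ, ∀ a ∈ 𝔞 ^ n, a • m = 0

/-- The arithmetic rank of an ideal `𝔞`: the least `n` such that there exist `a₁, …, aₙ ∈ R`
with `Rad (a₁, …, aₙ) = Rad 𝔞`. -/
noncomputable def arithRank {R : Type u} [CommRing R] (𝔞 : Ideal R) : ℕ :=
  sInf {n : ℕ | ∃ f : Fin n → R, (Ideal.span (Set.range f)).radical = 𝔞.radical}

/-!
Embedding the quotient of `M` by its `𝔞`-torsion submodule `H^0_𝔞(M)` into a torsion-free injective
module shifts local cohomology down by one degree, so by induction on `t` it suffices to show that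
an `𝔞`-torsion module `N` in `FD_{≤1}` is cofinite as soon as `Ext^0(R/𝔞, N)` and `Ext^1(R/𝔞, N)`
are finitely generated. After dividing out a finitely generated submodule, `dim N ≤ 1`.

Multiplication by `x ∈ 𝔞` induces zero on `Ext(R/𝔞, N)`, so `N` is cofinite if the kernel and the
cokernel of `x` on `N` are. The kernel is dealt with by Noetherian induction on the annihilator. If
`N` is supported at maximal ideals then it is Artinian, being `𝔞`-torsion with a finitely generated
submodule annihilated by `𝔞`, and a general `x` has a cokernel of finite length. If `dim N ≤ 1`,
apply this to the localizations of `N` at its finitely many non-maximal primes: for general `x` the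
cokernel has a finitely generated submodule modulo which it is supported at maximal ideals.

If `dim R ≤ 2`, an `𝔞`-torsion module on which `Ext^0(R/𝔞, -)` is finitely generated lies in
`FD_{≤1}`: a finitely generated submodule `0 :_N 𝔞ᵏ` removes the minimal primes of `R` from its
support.
-/

section ExtComparison

universe v w u'

open Abelian HomologicalComplex

variable (R : Type u) [CommRing R] {C : Type u'} [Category.{v} C] [Abelian C] [Linear R C]
  {X X' : C} (P : ProjectiveResolution X) {P' : ProjectiveResolution X'} (Y : C) (n : ℕ)

/-- The inclusion of the cocycles of `Hom(P, Y)` into the cochains, as a linear map into the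
morphisms `Pₙ ⟶ Y`. -/
noncomputable def cocycleHom :
    (P.complex.linearYonedaObj R Y).cycles n →ₗ[R] (P.complex.X n ⟶ Y) :=
  ((P.complex.linearYonedaObj R Y).iCycles n).hom

variable {Y n} in
lemma d_comp_cocycleHom (z : (P.complex.linearYonedaObj R Y).cycles n) :
    P.complex.d (n + 1) n ≫ cocycleHom R P Y n z = 0 :=
  ConcreteCategory.congr_hom ((P.complex.linearYonedaObj R Y).iCycles_d n (n + 1)) z

lemma cocycleHom_injective : Function.Injective (cocycleHom R P Y n) :=
  (ModuleCat.mono_iff_injective ((P.complex.linearYonedaObj R Y).iCycles n)).1 inferInstance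

variable {Y n} in
lemma exists_cocycleHom_eq (f : P.complex.X n ⟶ Y) (hf : P.complex.d (n + 1) n ≫ f = 0) :
    ∃ z, cocycleHom R P Y n z = f := by
  have exact := (ShortComplex.ShortExact.moduleCat_exact_iff_function_exact _).1
    (ShortComplex.exact_of_f_is_kernel (.mk _ _ ((P.complex.linearYonedaObj R Y).iCycles_d n _))
      ((P.complex.linearYonedaObj R Y).cyclesIsKernel n (n + 1) (by simp)))
  exact (exact f).1 hf

variable {Y} in
lemma cocycleHom_toCycles (f : P.complex.X n ⟶ Y) :
    cocycleHom R P Y (n + 1) (((P.complex.linearYonedaObj R Y).toCycles n (n + 1)).hom f) =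
      P.complex.d (n + 1) n ≫ f :=
  ConcreteCategory.congr_hom ((P.complex.linearYonedaObj R Y).toCycles_i n (n + 1)) f

lemma homologyπ_linearYonedaObj_surjective :
    Function.Surjective ((P.complex.linearYonedaObj R Y).homologyπ n).hom :=
  (ModuleCat.epi_iff_surjective _).1 inferInstance

lemma homologyπ_zero_linearYonedaObj_injective :
    Function.Injective ((P.complex.linearYonedaObj R Y).homologyπ 0).hom := by
  have := (P.complex.linearYonedaObj R Y).isIso_homologyπ 0 0 (by simp)
    (HomologicalComplex.shape _ _ _ (by simp))
  exact (ModuleCat.mono_iff_injective _).1 inferInstance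

lemma exact_toCycles_homologyπ_linearYonedaObj :
    Function.Exact ((P.complex.linearYonedaObj R Y).toCycles n (n + 1)).hom
      ((P.complex.linearYonedaObj R Y).homologyπ (n + 1)).hom :=
  (ShortComplex.ShortExact.moduleCat_exact_iff_function_exact _).1
    (ShortComplex.exact_of_g_is_cokernel
      (.mk _ _ ((P.complex.linearYonedaObj R Y).toCycles_comp_homologyπ n (n + 1)))
      ((P.complex.linearYonedaObj R Y).homologyIsCokernel n (n + 1) (by simp)))

section

variable {R P Y n} [HasExt.{w} C]

lemma extMk_zero_eq_zero_iff (f : P.complex.X 0 ⟶ Y) (hf : P.complex.d 1 0 ≫ f = 0) :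
    P.extMk f 1 (zero_add 1) hf = 0 ↔ f = 0 := by
  simp only [← P.extEquivCohomologyClass.apply_eq_iff_eq,
    ProjectiveResolution.extEquivCohomologyClass_extMk,
    ProjectiveResolution.extEquivCohomologyClass_zero,
    CochainComplex.HomComplex.CohomologyClass.mk_eq_zero_iff]
  rw [CochainComplex.HomComplex.Cocycle.toSingleMk_mem_coboundaries_iff _ _ _ _ _ 1 (by simp)]
  refine ⟨?_, fun hf ↦ ⟨0, by simp [hf]⟩⟩
  rintro ⟨g, hg⟩
  have d_eq_zero : P.cochainComplex.d (-((0 : ℕ) : ℤ)) 1 = 0 :=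
    (P.cochainComplex.isZero_of_isStrictlyLE 0 1 (by simp)).eq_of_tgt _ _
  rw [d_eq_zero, Limits.zero_comp] at hg
  rw [← cancel_epi (P.cochainComplexXIso (-((0 : ℕ) : ℤ)) 0 rfl).hom, ← hg, Limits.comp_zero]

lemma smul_extMk (r : R) (f : P.complex.X n ⟶ Y) (m : ℕ) (hm : n + 1 = m)
    (hf : P.complex.d m n ≫ f = 0) :
    r • P.extMk f m hm hf = P.extMk (r • f) m hm (by simp [hf]) := by
  rw [Ext.smul_eq_comp_mk₀, ProjectiveResolution.extMk_comp_mk₀]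
  congr 1
  simp

end

section

variable [HasExt.{w} C]

/-- The class in `Ext` of a cocycle of `Hom(P, Y)`. -/
noncomputable def cyclesToExt : (P.complex.linearYonedaObj R Y).cycles n →ₗ[R] Ext X Y n where
  toFun z := P.extMk (cocycleHom R P Y n z) (n + 1) rfl (d_comp_cocycleHom R P z)
  map_add' z w := by
    rw [ProjectiveResolution.add_extMk]
    congr 1
    exact map_add _ z w
  map_smul' r z := by
    rw [RingHom.id_apply, smul_extMk]
    congr 1
    exact map_smul _ r z

variable {Y n} in
lemma cyclesToExt_apply (z : (P.complex.linearYonedaObj R Y).cycles n) :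
    cyclesToExt R P Y n z =
      P.extMk (cocycleHom R P Y n z) (n + 1) rfl (d_comp_cocycleHom R P z) := rfl

lemma cyclesToExt_surjective : Function.Surjective (cyclesToExt R P Y n) := by
  intro α
  obtain ⟨f, hf, rfl⟩ := P.extMk_surjective α (n + 1) rfl
  obtain ⟨z, rfl⟩ := exists_cocycleHom_eq R P f hf
  exact ⟨z, rfl⟩

lemma ker_cyclesToExt :
    LinearMap.ker (cyclesToExt R P Y n) =
      LinearMap.ker ((P.complex.linearYonedaObj R Y).homologyπ n).hom := by
  ext z
  rw [LinearMap.mem_ker, LinearMap.mem_ker, cyclesToExt_apply]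
  obtain _ | n := n
  · rw [extMk_zero_eq_zero_iff, map_eq_zero_iff _ (cocycleHom_injective R P Y 0)]
    exact (map_eq_zero_iff _ (homologyπ_zero_linearYonedaObj_injective R P Y)).symm
  · rw [P.extMk_eq_zero_iff _ _ _ _ n rfl]
    refine Iff.trans ?_ (exact_toCycles_homologyπ_linearYonedaObj R P Y n z).symm
    constructor
    · rintro ⟨g, hg⟩
      exact ⟨g, cocycleHom_injective R P Y _ ((cocycleHom_toCycles R P n g).trans hg)⟩
    · rintro ⟨g, rfl⟩
      exact ⟨g, (cocycleHom_toCycles R P n g).symm⟩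

/-- The comparison of the cohomology of `Hom(P, Y)`, for a projective resolution `P` of `X`, with
`Ext X Y` computed in the derived category. -/
noncomputable def homologyEquivExt :
    (P.complex.linearYonedaObj R Y).homology n ≃ₗ[R] Ext X Y n :=
  (((P.complex.linearYonedaObj R Y).homologyπ n).hom.quotKerEquivOfSurjective
    (homologyπ_linearYonedaObj_surjective R P Y n)).symm ≪≫ₗ
    Submodule.quotEquivOfEq _ _ (ker_cyclesToExt R P Y n).symm ≪≫ₗ
    (cyclesToExt R P Y n).quotKerEquivOfSurjective (cyclesToExt_surjective R P Y n)

variable {Y n} in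
lemma homologyEquivExt_homologyπ (z : (P.complex.linearYonedaObj R Y).cycles n) :
    homologyEquivExt R P Y n (((P.complex.linearYonedaObj R Y).homologyπ n).hom z) =
      cyclesToExt R P Y n z := by
  have symm_apply : (((P.complex.linearYonedaObj R Y).homologyπ n).hom.quotKerEquivOfSurjective
      (homologyπ_linearYonedaObj_surjective R P Y n)).symm
      (((P.complex.linearYonedaObj R Y).homologyπ n).hom z) = Submodule.Quotient.mk z := by
    rw [LinearEquiv.symm_apply_eq]
    rfl
  exact congrArg (fun q ↦ (cyclesToExt R P Y n).quotKerEquivOfSurjective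
    (cyclesToExt_surjective R P Y n)
      (Submodule.quotEquivOfEq _ _ (ker_cyclesToExt R P Y n).symm q)) symm_apply

end

/-- The map `Hom(P, Y) ⟶ Hom(P', Y)` induced by a morphism of complexes `P' ⟶ P`. -/
noncomputable def linearYonedaObjMap {P : ProjectiveResolution X}
    (φ : P'.complex ⟶ P.complex) :
    P.complex.linearYonedaObj R Y ⟶ P'.complex.linearYonedaObj R Y :=
  (unopFunctor (ModuleCat R) _).map
    ((((linearYoneda R C).obj Y).rightOp.mapHomologicalComplex _).map φ).op

variable {P}

lemma cocycleHom_cyclesMap (φ : P'.complex ⟶ P.complex)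
    (z : (P.complex.linearYonedaObj R Y).cycles n) :
    cocycleHom R P' Y n ((cyclesMap (linearYonedaObjMap R Y φ) n).hom z) =
      φ.f n ≫ cocycleHom R P Y n z :=
  ConcreteCategory.congr_hom (cyclesMap_i (linearYonedaObjMap R Y φ) n) z

lemma homologyEquivExt_homologyMap [HasExt.{w} C] {g : X' ⟶ X}
    (φ : ProjectiveResolution.Hom P' P g) (x : (P.complex.linearYonedaObj R Y).homology n) :
    homologyEquivExt R P' Y n ((homologyMap (linearYonedaObjMap R Y φ.hom) n).hom x) =
      (Ext.mk₀ g).comp (homologyEquivExt R P Y n x) (zero_add n) := by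
  obtain ⟨z, rfl⟩ := homologyπ_linearYonedaObj_surjective R P Y n x
  have naturality := ConcreteCategory.congr_hom
    (homologyπ_naturality (linearYonedaObjMap R Y φ.hom) n) z
  refine (congrArg (homologyEquivExt R P' Y n) naturality).trans
    ((homologyEquivExt_homologyπ R P' _).trans ?_)
  rw [homologyEquivExt_homologyπ, cyclesToExt_apply, cyclesToExt_apply,
    ProjectiveResolution.mk₀_comp_extMk _ _ _ _ φ]
  congr 1
  exact cocycleHom_cyclesMap R Y n φ.hom z

lemma isoExt_hom_naturality [EnoughProjectives C] {g : X' ⟶ X}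
    (φ : ProjectiveResolution.Hom P' P g) :
    ((Ext R C n).map g.op).app Y ≫ (P'.isoExt n Y).hom =
      (P.isoExt n Y).hom ≫ homologyMap (linearYonedaObjMap R Y φ.hom) n := by
  have comm : φ.hom.f 0 ≫ P.π.f 0 = P'.π.f 0 ≫ g :=
    φ.hom_f_zero_comp_π_f_zero.trans (by simp)
  have derived := ProjectiveResolution.isoLeftDerivedObj_inv_naturality g P' P φ.hom comm
    (((linearYoneda R C).obj Y).rightOp) n
  have opposite := (homologyOpNatIso (ModuleCat R) (.up ℕ) n).inv.naturality
    (linearYonedaObjMap R Y φ.hom).op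
  apply Quiver.Hom.op_inj
  refine (Category.assoc _ _ _).trans ((congrArg _ derived).trans ?_)
  refine (Category.assoc _ _ _).symm.trans ((congrArg (· ≫ _) opposite.symm).trans ?_)
  exact Category.assoc _ _ _

end ExtComparison

section ExtObj

open Abelian

variable {R : Type u} [CommRing R] {X X' : ModuleCat.{u} R}

/-- The comparison of the left derived functors of `Hom` with `Ext` in the derived category. -/
noncomputable def extObjEquiv (X Y : ModuleCat.{u} R) (n : ℕ) :
    extObj X Y n ≃ₗ[R] Ext X Y n :=
  ((projectiveResolution X).isoExt n Y).toLinearEquiv ≪≫ₗ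
    homologyEquivExt R (projectiveResolution X) Y n

/-- The map on `extObj` induced by a morphism in the contravariant variable. -/
noncomputable def extObjMap (g : X' ⟶ X) (Y : ModuleCat.{u} R) (n : ℕ) :
    extObj X Y n →ₗ[R] extObj X' Y n :=
  (((Ext R (ModuleCat.{u} R) n).map g.op).app Y).hom

lemma extObjEquiv_extObjMap (g : X' ⟶ X) (Y : ModuleCat.{u} R) (n : ℕ) (x : extObj X Y n) :
    extObjEquiv X' Y n (extObjMap g Y n x) =
      (Ext.mk₀ g).comp (extObjEquiv X Y n x) (zero_add n) := by
  let φ : ProjectiveResolution.Hom (projectiveResolution X') (projectiveResolution X) g :=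
    ⟨ProjectiveResolution.lift g _ _,
      (ProjectiveResolution.lift_commutes_zero g _ _).trans (by simp)⟩
  exact (congrArg (homologyEquivExt R _ Y n)
    (ConcreteCategory.congr_hom (isoExt_hom_naturality R Y n φ) x)).trans
      (homologyEquivExt_homologyMap R Y n φ _)

end ExtObj

section LocalCohomologyLimit

open Abelian Opposite Limits

variable {R : Type u} [CommRing R] (𝔞 : Ideal R)

/-- The projection `R/𝔞ⁿ ⟶ R/𝔞ᵐ` for `m ≤ n`. -/
noncomputable def quotPowMap {m n : ℕ} (h : m ≤ n) :
    ModuleCat.of R (R ⧸ 𝔞 ^ n) ⟶ ModuleCat.of R (R ⧸ 𝔞 ^ m) :=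
  ModuleCat.ofHom (Submodule.factor (Ideal.pow_le_pow_right h))

@[simp]
lemma quotPowMap_self (n : ℕ) : quotPowMap 𝔞 (le_refl n) = 𝟙 _ :=
  ModuleCat.hom_ext (Submodule.linearMap_qext _ rfl)

@[simp]
lemma quotPowMap_comp {l m n : ℕ} (h : l ≤ m) (h' : m ≤ n) :
    quotPowMap 𝔞 h' ≫ quotPowMap 𝔞 h = quotPowMap 𝔞 (h.trans h') :=
  ModuleCat.hom_ext (Submodule.linearMap_qext _ rfl)

/-- The transition maps of the system `n ↦ Ext^i(R/𝔞ⁿ, M)`. -/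
noncomputable def extPowMap (M : ModuleCat.{u} R) (i m n : ℕ) (h : m ≤ n) :
    Ext (ModuleCat.of R (R ⧸ 𝔞 ^ m)) M i →ₗ[R] Ext (ModuleCat.of R (R ⧸ 𝔞 ^ n)) M i :=
  Ext.precompOfLinear (Ext.mk₀ (quotPowMap 𝔞 h)) R M (zero_add i)

lemma extPowMap_apply (M : ModuleCat.{u} R) (i : ℕ) {m n : ℕ} (h : m ≤ n)
    (x : Ext (ModuleCat.of R (R ⧸ 𝔞 ^ m)) M i) :
    extPowMap 𝔞 M i m n h x = (Ext.mk₀ (quotPowMap 𝔞 h)).comp x (zero_add i) := rfl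

instance (M : ModuleCat.{u} R) (i : ℕ) :
    DirectedSystem (fun n : ℕ ↦ Ext (ModuleCat.of R (R ⧸ 𝔞 ^ n)) M i)
      (fun m n h ↦ extPowMap 𝔞 M i m n h) where
  map_self _ x := by simp [extPowMap_apply]
  map_map _ _ _ h h' x := by
    simp only [extPowMap_apply]
    rw [Ext.mk₀_comp_mk₀_assoc, quotPowMap_comp]

/-- The local cohomology module `H^i_𝔞(M)`, written as the unbundled direct limit of the modules
`Ext^i(R/𝔞ⁿ, M)` with `Ext` computed in the derived category; see `localCohomologyEquivLimit`. -/
abbrev LocalCohomologyLimit (i : ℕ) (M : ModuleCat.{u} R) : Type u :=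
  Module.DirectLimit (fun n : ℕ ↦ Ext (ModuleCat.of R (R ⧸ 𝔞 ^ n)) M i) (extPowMap 𝔞 M i)

lemma extObjEquiv_symm_extPowMap (M : ModuleCat.{u} R) (i : ℕ) {m n : ℕ} (h : m ≤ n)
    (x : Ext (ModuleCat.of R (R ⧸ 𝔞 ^ m)) M i) :
    (extObjEquiv _ M i).symm (extPowMap 𝔞 M i m n h x) =
      extObjMap (quotPowMap 𝔞 h) M i ((extObjEquiv _ M i).symm x) := by
  rw [LinearEquiv.symm_apply_eq, extObjEquiv_extObjMap, LinearEquiv.apply_symm_apply,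
    extPowMap_apply]

/-- `LocalCohomologyLimit` as a cocone over the diagram whose colimit defines `localCohomology`. -/
noncomputable def localCohomologyLimitCocone (i : ℕ) (M : ModuleCat.{u} R) :
    Cocone (localCohomology.diagram (localCohomology.idealPowersDiagram 𝔞) i ⋙
      (evaluation _ (ModuleCat.{u} R)).obj M) where
  pt := ModuleCat.of R (LocalCohomologyLimit 𝔞 i M)
  ι.app n := ModuleCat.ofHom (Module.DirectLimit.of R ℕ _ (extPowMap 𝔞 M i) n.unop.unop ∘ₗ
    (extObjEquiv (ModuleCat.of R (R ⧸ 𝔞 ^ n.unop.unop)) M i).toLinearMap)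
  ι.naturality m n f := by
    ext x
    exact (congrArg (Module.DirectLimit.of R ℕ _ (extPowMap 𝔞 M i) n.unop.unop)
      (extObjEquiv_extObjMap (quotPowMap 𝔞 (leOfHom f.unop.unop)) M i x)).trans
        (Module.DirectLimit.of_f (hij := leOfHom f.unop.unop))

/-- The map out of `LocalCohomologyLimit` determined by a cocone over the diagram whose colimit
defines `localCohomology`. -/
noncomputable def localCohomologyLimitDesc {i : ℕ} {M : ModuleCat.{u} R}
    (s : Cocone (localCohomology.diagram (localCohomology.idealPowersDiagram 𝔞) i ⋙
      (evaluation _ (ModuleCat.{u} R)).obj M)) :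
    LocalCohomologyLimit 𝔞 i M →ₗ[R] s.pt :=
  Module.DirectLimit.lift R ℕ _ (extPowMap 𝔞 M i)
    (fun n ↦ (s.ι.app (op (op n))).hom ∘ₗ
      (extObjEquiv (ModuleCat.of R (R ⧸ 𝔞 ^ n)) M i).symm.toLinearMap)
    (fun _ n h x ↦ (congrArg (s.ι.app (op (op n))).hom (extObjEquiv_symm_extPowMap 𝔞 M i h x)).trans
      (ConcreteCategory.congr_hom (s.w (homOfLE h).op.op) _))

lemma localCohomologyLimitDesc_of {i : ℕ} {M : ModuleCat.{u} R}
    (s : Cocone (localCohomology.diagram (localCohomology.idealPowersDiagram 𝔞) i ⋙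
      (evaluation _ (ModuleCat.{u} R)).obj M))
    (n : ℕ) (x : extObj (ModuleCat.of R (R ⧸ 𝔞 ^ n)) M i) :
    localCohomologyLimitDesc 𝔞 s
        (Module.DirectLimit.of R ℕ _ (extPowMap 𝔞 M i) n (extObjEquiv _ M i x)) =
      (s.ι.app (op (op n))).hom x := by
  rw [localCohomologyLimitDesc, Module.DirectLimit.lift_of]
  exact congrArg (s.ι.app (op (op n))).hom (LinearEquiv.symm_apply_apply _ x)

/-- The universal property of `localCohomologyLimitCocone`. -/
noncomputable def isColimitLocalCohomologyLimitCocone (i : ℕ) (M : ModuleCat.{u} R) :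
    IsColimit (localCohomologyLimitCocone 𝔞 i M) where
  desc s := ModuleCat.ofHom (localCohomologyLimitDesc 𝔞 s)
  fac s n := ModuleCat.hom_ext (LinearMap.ext (localCohomologyLimitDesc_of 𝔞 s n.unop.unop))
  uniq s f hf := by
    refine ModuleCat.hom_ext (Module.DirectLimit.hom_ext fun n ↦ LinearMap.ext fun x ↦ ?_)
    obtain ⟨x, rfl⟩ := (extObjEquiv (ModuleCat.of R (R ⧸ 𝔞 ^ n)) M i).surjective x
    exact (ConcreteCategory.congr_hom (hf (op (op n))) x).trans
      (localCohomologyLimitDesc_of 𝔞 s n x).symm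

/-- Local cohomology agrees with the unbundled direct limit. -/
noncomputable def localCohomologyEquivLimit (i : ℕ) (M : ModuleCat.{u} R) :
    (localCohomology 𝔞 i).obj M ≃ₗ[R] LocalCohomologyLimit 𝔞 i M :=
  (colimitObjIsoColimitCompEvaluation _ M ≪≫ (colimit.isColimit _).coconePointUniqueUpToIso
    (isColimitLocalCohomologyLimitCocone 𝔞 i M)).toLinearEquiv

end LocalCohomologyLimit

section ExtModule

open Abelian

variable {R : Type u} [CommRing R] {A B C : Type u} [AddCommGroup A] [Module R A]
  [AddCommGroup B] [Module R B] [AddCommGroup C] [Module R C]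

lemma shortExact_moduleCatMk {f : A →ₗ[R] B} {g : B →ₗ[R] C} (h : Function.Exact f g)
    (hf : Function.Injective f) (hg : Function.Surjective g) :
    (ShortComplex.moduleCatMk f g h.linearMap_comp_eq_zero).ShortExact where
  exact := (ShortComplex.ShortExact.moduleCat_exact_iff_function_exact _).2 h
  mono_f := (ModuleCat.mono_iff_injective _).2 hf
  epi_g := (ModuleCat.epi_iff_surjective _).2 hg

/-- The functoriality of `Ext^j(X, -)` for unbundled linear maps. -/
noncomputable def extMap (X : ModuleCat.{u} R) (j : ℕ) (f : A →ₗ[R] B) :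
    Ext X (ModuleCat.of R A) j →ₗ[R] Ext X (ModuleCat.of R B) j :=
  Ext.postcompOfLinear (Ext.mk₀ (ModuleCat.ofHom f)) R X (add_zero j)

lemma extMap_apply (X : ModuleCat.{u} R) (j : ℕ) (f : A →ₗ[R] B)
    (x : Ext X (ModuleCat.of R A) j) :
    extMap X j f x = x.comp (Ext.mk₀ (ModuleCat.ofHom f)) (add_zero j) := rfl

lemma extMap_comp (X : ModuleCat.{u} R) (j : ℕ) (f : A →ₗ[R] B) (g : B →ₗ[R] C) :
    extMap X j (g ∘ₗ f) = extMap X j g ∘ₗ extMap X j f := by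
  ext x
  rw [LinearMap.comp_apply, extMap_apply, extMap_apply, extMap_apply, ModuleCat.ofHom_comp,
    Ext.comp_assoc_of_third_deg_zero, Ext.mk₀_comp_mk₀]

lemma extMap_id (X : ModuleCat.{u} R) (j : ℕ) :
    extMap X j (LinearMap.id : A →ₗ[R] A) = LinearMap.id := by
  ext x
  rw [extMap_apply, ModuleCat.ofHom_id, Ext.comp_mk₀_id, LinearMap.id_apply]

lemma extMap_lsmul (X : ModuleCat.{u} R) (j : ℕ) (r : R) :
    extMap X j (LinearMap.lsmul R A r) = LinearMap.lsmul R _ r := by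
  ext x
  exact (Ext.smul_eq_comp_mk₀ x r).symm

/-- The connecting map `Ext^j(X, C) → Ext^{j+1}(X, A)` of a short exact sequence
`0 → A → B → C → 0`. -/
noncomputable def extδ (X : ModuleCat.{u} R) (j : ℕ) {f : A →ₗ[R] B} {g : B →ₗ[R] C}
    (h : Function.Exact f g) (hf : Function.Injective f) (hg : Function.Surjective g) :
    Ext X (ModuleCat.of R C) j →ₗ[R] Ext X (ModuleCat.of R A) (j + 1) :=
  Ext.postcompOfLinear (shortExact_moduleCatMk h hf hg).extClass R X rfl

section Exact

variable (X : ModuleCat.{u} R) (j : ℕ) {f : A →ₗ[R] B} {g : B →ₗ[R] C}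
  (h : Function.Exact f g) (hf : Function.Injective f) (hg : Function.Surjective g)

include h hf hg in
lemma exact_extMap_extMap : Function.Exact (extMap X j f) (extMap X j g) :=
  (ShortComplex.ab_exact_iff_function_exact _).1
    (Ext.covariant_sequence_exact₂' X (shortExact_moduleCatMk h hf hg) j)

lemma exact_extMap_extδ : Function.Exact (extMap X j g) (extδ X j h hf hg) :=
  (ShortComplex.ab_exact_iff_function_exact _).1
    (Ext.covariant_sequence_exact₃' X (shortExact_moduleCatMk h hf hg) j _ rfl)

lemma exact_extδ_extMap : Function.Exact (extδ X j h hf hg) (extMap X (j + 1) f) :=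
  (ShortComplex.ab_exact_iff_function_exact _).1
    (Ext.covariant_sequence_exact₁' X (shortExact_moduleCatMk h hf hg) j _ rfl)

end Exact

lemma extMap_zero_injective (X : ModuleCat.{u} R) {f : A →ₗ[R] B} (hf : Function.Injective f) :
    Function.Injective (extMap X 0 f) :=
  have : Mono (ModuleCat.ofHom f) := (ModuleCat.mono_iff_injective _).2 hf
  Ext.postcomp_mk₀_injective_of_mono X (ModuleCat.ofHom f)

lemma smul_ext_quotient_eq_zero (I : Ideal R) {a : R} (ha : a ∈ I) (M : ModuleCat.{u} R) (j : ℕ)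
    (x : Ext (ModuleCat.of R (R ⧸ I)) M j) : a • x = 0 := by
  have smul_id : a • 𝟙 (ModuleCat.of R (R ⧸ I)) = 0 :=
    ModuleCat.hom_ext <| Submodule.linearMap_qext _ <| LinearMap.ext_ring <|
      (Submodule.Quotient.mk_eq_zero _).2 (I.mul_mem_right 1 ha)
  calc a • x = (Ext.mk₀ (a • 𝟙 (ModuleCat.of R (R ⧸ I)))).comp x (zero_add j) := by
        rw [Ext.mk₀_smul, Ext.smul_comp, Ext.mk₀_id_comp]
    _ = 0 := by rw [smul_id, Ext.mk₀_zero, Ext.zero_comp]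

variable (A) in
/-- Homomorphisms `R/I → A` are the elements of `A` killed by `I`, via evaluation at `1`. -/
def quotientHomEquivTorsionBySet (I : Ideal R) :
    ((R ⧸ I) →ₗ[R] A) ≃ₗ[R] Submodule.torsionBySet R A I where
  toFun f := ⟨f 1, (Submodule.mem_torsionBySet_iff _ _).2 fun a ↦
    have smul_one : (a : R) • (1 : R ⧸ I) = 0 :=
      (Submodule.Quotient.mk_eq_zero I).2 (I.mul_mem_right 1 a.2)
    by rw [← map_smul, smul_one, map_zero]⟩
  map_add' _ _ := rfl
  map_smul' _ _ := rfl
  invFun y := Submodule.liftQ I (LinearMap.toSpanSingleton R A y) fun a ha ↦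
    (Submodule.mem_torsionBySet_iff _ _).1 y.2 ⟨a, ha⟩
  left_inv f := Submodule.linearMap_qext _ <| LinearMap.ext_ring <| one_smul R (f 1)
  right_inv y := Subtype.ext <| one_smul R (y : A)

variable (A) in
/-- `Ext^0(R/I, A)` is the submodule of elements of `A` killed by `I`. -/
noncomputable def extZeroEquivTorsionBySet (I : Ideal R) :
    Ext (ModuleCat.of R (R ⧸ I)) (ModuleCat.of R A) 0 ≃ₗ[R] Submodule.torsionBySet R A I :=
  Ext.linearEquiv₀ ≪≫ₗ ModuleCat.homLinearEquiv ≪≫ₗ quotientHomEquivTorsionBySet A I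

lemma extZeroEquivTorsionBySet_mk₀ (I : Ideal R)
    (φ : ModuleCat.of R (R ⧸ I) ⟶ ModuleCat.of R A) :
    (extZeroEquivTorsionBySet A I (Ext.mk₀ φ) : A) = φ.hom 1 :=
  have : Ext.linearEquiv₀ (R := R) (Ext.mk₀ φ) = φ :=
    (Ext.mk₀_bijective _ _).1 (Ext.mk₀_linearEquiv₀_apply _)
  congrArg (fun ψ ↦ (quotientHomEquivTorsionBySet A I ψ.hom : A)) this

end ExtModule

section ExtFinite

open Abelian

variable {R : Type u} [CommRing R] {A B C : Type u} [AddCommGroup A] [Module R A]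
  [AddCommGroup B] [Module R B] [AddCommGroup C] [Module R C]

lemma finite_of_exact [IsNoetherianRing R] {f : A →ₗ[R] B} {g : B →ₗ[R] C}
    (h : Function.Exact f g) [Module.Finite R A] [Module.Finite R C] : Module.Finite R B :=
  have := isNoetherian_of_range_eq_ker f g (LinearMap.exact_iff.1 h).symm
  inferInstance

/-- Finite generation of `Ext^j(X, N)` for an unbundled module `N`. -/
def ExtFinite (X : ModuleCat.{u} R) (j : ℕ) (N : Type u) [AddCommGroup N] [Module R N] : Prop :=
  Module.Finite R (Ext X (ModuleCat.of R N) j)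

lemma extFinite_zero_iff (I : Ideal R) :
    ExtFinite (ModuleCat.of R (R ⧸ I)) 0 A ↔ (Submodule.torsionBySet R A I).FG := by
  rw [← Module.Finite.iff_fg]
  exact Module.Finite.equiv_iff (extZeroEquivTorsionBySet A I)

namespace ExtFinite

variable {X : ModuleCat.{u} R} {j : ℕ}

lemma of_equiv (e : A ≃ₗ[R] B) (hA : ExtFinite X j A) : ExtFinite X j B := by
  have : Module.Finite R (Ext X (ModuleCat.of R A) j) := hA
  refine Module.Finite.of_surjective (extMap X j e.toLinearMap) fun y ↦
    ⟨extMap X j e.symm.toLinearMap y, ?_⟩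
  rw [← LinearMap.comp_apply, ← extMap_comp, LinearEquiv.comp_symm, extMap_id, LinearMap.id_apply]

lemma of_finite [IsNoetherianRing R] [Module.Finite R X] [Module.Finite R A] :
    ExtFinite X j A :=
  have : Module.Finite R (ModuleCat.of R A) := ‹Module.Finite R A›
  ModuleCat.finite_ext R _ _ _

lemma finite_ker_extMap {f : A →ₗ[R] B} {g : B →ₗ[R] C} (h : Function.Exact f g)
    (hf : Function.Injective f) (hg : Function.Surjective g) (hC : ∀ i < j, ExtFinite X i C) :
    Module.Finite R (LinearMap.ker (extMap X j f)) := by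
  cases j with
  | zero =>
    rw [LinearMap.ker_eq_bot.2 (extMap_zero_injective X hf)]
    infer_instance
  | succ i =>
    have : Module.Finite R (Ext X (ModuleCat.of R C) i) := hC i i.lt_succ_self
    rw [LinearMap.exact_iff.1 (exact_extδ_extMap X i h hf hg)]
    infer_instance

variable [IsNoetherianRing R]

lemma of_injective {f : A →ₗ[R] B} (hf : Function.Injective f) (hB : ExtFinite X 0 B) :
    ExtFinite X 0 A :=
  have : Module.Finite R (Ext X (ModuleCat.of R B) 0) := hB
  Module.Finite.of_injective _ (extMap_zero_injective X hf)

section ShortExact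

variable {f : A →ₗ[R] B} {g : B →ₗ[R] C} (h : Function.Exact f g) (hf : Function.Injective f)
  (hg : Function.Surjective g)

include h hf hg

lemma middle (hA : ExtFinite X j A) (hC : ExtFinite X j C) : ExtFinite X j B :=
  have : Module.Finite R (Ext X (ModuleCat.of R A) j) := hA
  have : Module.Finite R (Ext X (ModuleCat.of R C) j) := hC
  finite_of_exact (exact_extMap_extMap X j h hf hg)

lemma right (hB : ExtFinite X j B) (hA : ExtFinite X (j + 1) A) : ExtFinite X j C :=
  have : Module.Finite R (Ext X (ModuleCat.of R B) j) := hB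
  have : Module.Finite R (Ext X (ModuleCat.of R A) (j + 1)) := hA
  finite_of_exact (exact_extMap_extδ X j h hf hg)

lemma left (hC : ExtFinite X j C) (hB : ExtFinite X (j + 1) B) : ExtFinite X (j + 1) A :=
  have : Module.Finite R (Ext X (ModuleCat.of R C) j) := hC
  have : Module.Finite R (Ext X (ModuleCat.of R B) (j + 1)) := hB
  finite_of_exact (exact_extδ_extMap X j h hf hg)

lemma of_finite_range_extMap (hrange : Module.Finite R (LinearMap.range (extMap X j g)))
    (hA : ExtFinite X (j + 1) A) : ExtFinite X j C :=
  have : Module.Finite R (LinearMap.range (extMap X j g)) := hrange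
  have : Module.Finite R (Ext X (ModuleCat.of R A) (j + 1)) := hA
  finite_of_exact (f := (LinearMap.range (extMap X j g)).subtype) (g := extδ X j h hf hg) <|
    LinearMap.exact_iff.2 <|
      (LinearMap.exact_iff.1 (exact_extMap_extδ X j h hf hg)).trans (Submodule.range_subtype _).symm

end ShortExact

lemma quotient_iff [Module.Finite R X] {N : Submodule R A} (hN : N.FG) :
    ExtFinite X j (A ⧸ N) ↔ ExtFinite X j A :=
  have : Module.Finite R N := Module.Finite.iff_fg.2 hN
  have exact : Function.Exact N.subtype N.mkQ := LinearMap.exact_subtype_mkQ N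
  ⟨middle exact N.injective_subtype N.mkQ_surjective of_finite,
    fun hA ↦ right exact N.injective_subtype N.mkQ_surjective hA of_finite⟩

/-- The composite `A → range f → A` is zero on `Ext^j(X, -)`, so the image of `Ext^j(X, A)` in
`Ext^j(X, range f)` lies in the kernel of `Ext^j(X, range f) → Ext^j(X, A)`. -/
lemma range_of_extMap_eq_zero {f : A →ₗ[R] A} (hf : extMap X j f = 0)
    (hker : ExtFinite X (j + 1) (LinearMap.ker f))
    (hcoker : ∀ i < j, ExtFinite X i (A ⧸ LinearMap.range f)) :
    ExtFinite X j (LinearMap.range f) := by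
  have finite_ker : Module.Finite R (LinearMap.ker (extMap X j (LinearMap.range f).subtype)) :=
    finite_ker_extMap (LinearMap.exact_subtype_mkQ _) (LinearMap.range f).injective_subtype
      (LinearMap.range f).mkQ_surjective hcoker
  have range_le_ker : LinearMap.range (extMap X j f.rangeRestrict) ≤
      LinearMap.ker (extMap X j (LinearMap.range f).subtype) :=
    LinearMap.range_le_ker_iff.2 ((extMap_comp X j f.rangeRestrict _).symm.trans hf)
  refine of_finite_range_extMap ?_ (LinearMap.ker f).injective_subtype f.surjective_rangeRestrict
    (Module.Finite.of_injective _ (Submodule.inclusion_injective range_le_ker)) hker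
  rw [LinearMap.exact_iff, LinearMap.ker_rangeRestrict, Submodule.range_subtype]

lemma of_ker_coker {f : A →ₗ[R] A} (hf : extMap X j f = 0)
    (hker : ∀ i ≤ j + 1, ExtFinite X i (LinearMap.ker f))
    (hcoker : ∀ i < j, ExtFinite X i (A ⧸ LinearMap.range f)) : ExtFinite X j A := by
  refine middle ?_ (LinearMap.ker f).injective_subtype f.surjective_rangeRestrict
    (hker j j.le_succ) (range_of_extMap_eq_zero hf (hker _ le_rfl) hcoker)
  rw [LinearMap.exact_iff, LinearMap.ker_rangeRestrict, Submodule.range_subtype]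

end ExtFinite

end ExtFinite

section DirectLimit

variable {R ι : Type*} [CommRing R] [Preorder ι] [Nonempty ι] [IsDirectedOrder ι]
  [DecidableEq ι] {F G H : ι → Type*}
  [∀ i, AddCommGroup (F i)] [∀ i, Module R (F i)] [∀ i, AddCommGroup (G i)] [∀ i, Module R (G i)]
  [∀ i, AddCommGroup (H i)] [∀ i, Module R (H i)]
  {f : ∀ i j, i ≤ j → F i →ₗ[R] F j} {g : ∀ i j, i ≤ j → G i →ₗ[R] G j}
  {h : ∀ i j, i ≤ j → H i →ₗ[R] H j} [DirectedSystem H (h · · ·)]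

lemma exact_directLimitMap {φ : ∀ i, F i →ₗ[R] G i} {ψ : ∀ i, G i →ₗ[R] H i}
    (hφ : ∀ i j hij, φ j ∘ₗ f i j hij = g i j hij ∘ₗ φ i)
    (hψ : ∀ i j hij, ψ j ∘ₗ g i j hij = h i j hij ∘ₗ ψ i)
    (exact : ∀ i, Function.Exact (φ i) (ψ i)) :
    Function.Exact (Module.DirectLimit.map φ hφ) (Module.DirectLimit.map ψ hψ) := by
  intro z
  constructor
  · intro hz
    obtain ⟨i, x, rfl⟩ := Module.DirectLimit.exists_of z
    rw [Module.DirectLimit.map_apply_of] at hz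
    obtain ⟨j, hij, hx⟩ := Module.DirectLimit.of.zero_exact hz
    obtain ⟨y, hy⟩ := (exact j _).1 ((LinearMap.congr_fun (hψ i j hij) x).trans hx)
    refine ⟨Module.DirectLimit.of R ι F f j y, ?_⟩
    rw [Module.DirectLimit.map_apply_of, hy, Module.DirectLimit.of_f]
  · rintro ⟨z, rfl⟩
    obtain ⟨i, x, rfl⟩ := Module.DirectLimit.exists_of z
    rw [Module.DirectLimit.map_apply_of, Module.DirectLimit.map_apply_of,
      (exact i).apply_apply_eq_zero, map_zero]

end DirectLimit

namespace LocalCohomologyLimit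

open Abelian

variable {R : Type u} [CommRing R] (𝔞 : Ideal R)

lemma postcomp_comp_extPowMap {M N : ModuleCat.{u} R} {i j p : ℕ} (β : Ext M N p) (h : i + p = j)
    (m n : ℕ) (hmn : m ≤ n) :
    Ext.postcompOfLinear β R _ h ∘ₗ extPowMap 𝔞 M i m n hmn =
      extPowMap 𝔞 N j m n hmn ∘ₗ Ext.postcompOfLinear β R _ h :=
  LinearMap.ext fun x ↦
    Ext.comp_assoc (Ext.mk₀ (quotPowMap 𝔞 hmn)) x β (zero_add i) h (by lia)

lemma isTorsionIdeal (i : ℕ) (M : ModuleCat.{u} R) :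
    IsTorsionIdeal 𝔞 (LocalCohomologyLimit 𝔞 i M) := by
  intro z
  obtain ⟨n, x, rfl⟩ := Module.DirectLimit.exists_of z
  exact ⟨n, fun a ha ↦ by rw [← map_smul, smul_ext_quotient_eq_zero _ ha, map_zero]⟩

lemma subsingleton_of_injective (i : ℕ) (M : ModuleCat.{u} R) [Injective M] :
    Subsingleton (LocalCohomologyLimit 𝔞 (i + 1) M) := by
  refine subsingleton_of_forall_eq 0 fun z ↦ ?_
  obtain ⟨n, x, rfl⟩ := Module.DirectLimit.exists_of z
  rw [x.eq_zero_of_injective, map_zero]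

variable {A B C : Type u} [AddCommGroup A] [Module R A]
  [AddCommGroup B] [Module R B] [AddCommGroup C] [Module R C]

/-- The functoriality of `H^i_𝔞` for unbundled linear maps. -/
noncomputable def map (i : ℕ) (f : A →ₗ[R] B) :
    LocalCohomologyLimit 𝔞 i (ModuleCat.of R A) →ₗ[R]
      LocalCohomologyLimit 𝔞 i (ModuleCat.of R B) :=
  Module.DirectLimit.map (fun n ↦ extMap (ModuleCat.of R (R ⧸ 𝔞 ^ n)) i f)
    (postcomp_comp_extPowMap 𝔞 (Ext.mk₀ (ModuleCat.ofHom f)) (add_zero i))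

lemma map_of (i : ℕ) (f : A →ₗ[R] B) (n : ℕ)
    (x : Ext (ModuleCat.of R (R ⧸ 𝔞 ^ n)) (ModuleCat.of R A) i) :
    map 𝔞 i f (Module.DirectLimit.of R ℕ _ (extPowMap 𝔞 _ i) n x) =
      Module.DirectLimit.of R ℕ _ (extPowMap 𝔞 _ i) n (extMap _ i f x) :=
  Module.DirectLimit.map_apply_of _ _ _

/-- The connecting map `H^i_𝔞(C) → H^{i+1}_𝔞(A)` of a short exact sequence
`0 → A → B → C → 0`. -/
noncomputable def δ (i : ℕ) {f : A →ₗ[R] B} {g : B →ₗ[R] C}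
    (h : Function.Exact f g) (hf : Function.Injective f) (hg : Function.Surjective g) :
    LocalCohomologyLimit 𝔞 i (ModuleCat.of R C) →ₗ[R]
      LocalCohomologyLimit 𝔞 (i + 1) (ModuleCat.of R A) :=
  Module.DirectLimit.map (fun n ↦ extδ (ModuleCat.of R (R ⧸ 𝔞 ^ n)) i h hf hg)
    (postcomp_comp_extPowMap 𝔞 (shortExact_moduleCatMk h hf hg).extClass rfl)

section ShortExact

variable (i : ℕ) {f : A →ₗ[R] B} {g : B →ₗ[R] C}
  (h : Function.Exact f g) (hf : Function.Injective f) (hg : Function.Surjective g)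

include h hf hg in
lemma exact_map_map : Function.Exact (map 𝔞 i f) (map 𝔞 i g) :=
  exact_directLimitMap _ _ fun _ ↦ exact_extMap_extMap _ i h hf hg

lemma exact_map_δ : Function.Exact (map 𝔞 i g) (δ 𝔞 i h hf hg) :=
  exact_directLimitMap _ _ fun _ ↦ exact_extMap_extδ _ i h hf hg

lemma exact_δ_map : Function.Exact (δ 𝔞 i h hf hg) (map 𝔞 (i + 1) f) :=
  exact_directLimitMap _ _ fun _ ↦ exact_extδ_extMap _ i h hf hg

variable {i}

include h hf hg in
lemma map_bijective [Subsingleton (LocalCohomologyLimit 𝔞 i (ModuleCat.of R A))]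
    [Subsingleton (LocalCohomologyLimit 𝔞 (i + 1) (ModuleCat.of R A))] :
    Function.Bijective (map 𝔞 i g) := by
  constructor
  · rw [injective_iff_map_eq_zero]
    intro x hx
    obtain ⟨y, rfl⟩ := (exact_map_map 𝔞 i h hf hg x).1 hx
    rw [Subsingleton.elim y 0, map_zero]
  · exact fun y ↦ (exact_map_δ 𝔞 i h hf hg y).1 (Subsingleton.elim _ _)

lemma δ_bijective [Subsingleton (LocalCohomologyLimit 𝔞 i (ModuleCat.of R B))]
    [Subsingleton (LocalCohomologyLimit 𝔞 (i + 1) (ModuleCat.of R B))] :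
    Function.Bijective (δ 𝔞 i h hf hg) := by
  constructor
  · rw [injective_iff_map_eq_zero]
    intro x hx
    obtain ⟨y, rfl⟩ := (exact_map_δ 𝔞 i h hf hg x).1 hx
    rw [Subsingleton.elim y 0, map_zero]
  · exact fun y ↦ (exact_δ_map 𝔞 i h hf hg y).1 (Subsingleton.elim _ _)

end ShortExact

variable (A) in
/-- The natural map `H^0_𝔞(A) → A`, evaluation at `1` of maps `R/𝔞ⁿ → A`. -/
noncomputable def zeroEval : LocalCohomologyLimit 𝔞 0 (ModuleCat.of R A) →ₗ[R] A :=
  Module.DirectLimit.lift R ℕ _ (extPowMap 𝔞 (ModuleCat.of R A) 0)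
    (fun n ↦ (Submodule.torsionBySet R A ↑(𝔞 ^ n)).subtype ∘ₗ
      (extZeroEquivTorsionBySet A (𝔞 ^ n)).toLinearMap) <| by
    intro m n h x
    obtain ⟨φ, rfl⟩ := (Ext.mk₀_bijective _ _).2 x
    rw [extPowMap_apply, Ext.mk₀_comp_mk₀]
    exact (extZeroEquivTorsionBySet_mk₀ _ _).trans (extZeroEquivTorsionBySet_mk₀ _ φ).symm

lemma zeroEval_of (n : ℕ) (x : Ext (ModuleCat.of R (R ⧸ 𝔞 ^ n)) (ModuleCat.of R A) 0) :
    zeroEval 𝔞 A (Module.DirectLimit.of R ℕ _ (extPowMap 𝔞 _ 0) n x) =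
      extZeroEquivTorsionBySet A (𝔞 ^ n) x :=
  Module.DirectLimit.lift_of _ _ _

lemma zeroEval_injective : Function.Injective (zeroEval 𝔞 A) :=
  Module.DirectLimit.lift_injective _ _ fun _ ↦
    Subtype.val_injective.comp (LinearEquiv.injective _)

lemma range_zeroEval : LinearMap.range (zeroEval 𝔞 A) = Ideal.primaryComponent A 𝔞 := by
  ext y
  rw [Ideal.primaryComponent_mem]
  constructor
  · rintro ⟨z, rfl⟩
    obtain ⟨n, x, rfl⟩ := Module.DirectLimit.exists_of z
    exact ⟨n, zeroEval_of 𝔞 n x ▸ SetLike.coe_mem _⟩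
  · rintro ⟨n, hy⟩
    refine ⟨Module.DirectLimit.of R ℕ _ _ n ((extZeroEquivTorsionBySet A (𝔞 ^ n)).symm ⟨y, hy⟩), ?_⟩
    rw [zeroEval_of, LinearEquiv.apply_symm_apply]

lemma zeroEval_map (f : A →ₗ[R] B) (z : LocalCohomologyLimit 𝔞 0 (ModuleCat.of R A)) :
    zeroEval 𝔞 B (map 𝔞 0 f z) = f (zeroEval 𝔞 A z) := by
  obtain ⟨n, x, rfl⟩ := Module.DirectLimit.exists_of z
  obtain ⟨φ, rfl⟩ := (Ext.mk₀_bijective _ _).2 x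
  rw [map_of, zeroEval_of, zeroEval_of, extMap_apply,
    Ext.mk₀_comp_mk₀, extZeroEquivTorsionBySet_mk₀, extZeroEquivTorsionBySet_mk₀]
  rfl

variable (A) in
/-- `H^0_𝔞(A)` is the `𝔞`-torsion submodule of `A`. -/
noncomputable def zeroEquiv :
    LocalCohomologyLimit 𝔞 0 (ModuleCat.of R A) ≃ₗ[R] Ideal.primaryComponent A 𝔞 :=
  LinearEquiv.ofInjective _ (zeroEval_injective 𝔞) ≪≫ₗ LinearEquiv.ofEq _ _ (range_zeroEval 𝔞)

end LocalCohomologyLimit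

section Torsion

variable {R : Type u} [CommRing R] {𝔞 : Ideal R} {A B : Type u} [AddCommGroup A] [Module R A]
  [AddCommGroup B] [Module R B]

lemma mem_primaryComponent_iff {x : A} :
    x ∈ Ideal.primaryComponent A 𝔞 ↔ ∃ n : ℕ, ∀ a ∈ 𝔞 ^ n, a • x = 0 := by
  simp [Ideal.primaryComponent_mem]

lemma torsionBySet_le_primaryComponent :
    Submodule.torsionBySet R A 𝔞 ≤ Ideal.primaryComponent A 𝔞 := fun x hx ↦
  (Ideal.primaryComponent_mem A 𝔞 x).2 ⟨1, by rwa [pow_one]⟩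

lemma isTorsionIdeal_iff_primaryComponent_eq_top :
    IsTorsionIdeal 𝔞 A ↔ Ideal.primaryComponent A 𝔞 = ⊤ := by
  simp only [IsTorsionIdeal, Submodule.eq_top_iff', mem_primaryComponent_iff]

variable (𝔞 A) in
lemma isTorsionIdeal_primaryComponent : IsTorsionIdeal 𝔞 (Ideal.primaryComponent A 𝔞) := by
  rintro ⟨x, hx⟩
  obtain ⟨n, hn⟩ := mem_primaryComponent_iff.1 hx
  exact ⟨n, fun a ha ↦ Subtype.ext (hn a ha)⟩

namespace IsTorsionIdeal

lemma of_injective (hB : IsTorsionIdeal 𝔞 B) {f : A →ₗ[R] B} (hf : Function.Injective f) :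
    IsTorsionIdeal 𝔞 A := fun x ↦ by
  obtain ⟨n, hn⟩ := hB (f x)
  exact ⟨n, fun a ha ↦ hf (by rw [map_smul, hn a ha, map_zero])⟩

lemma of_surjective (hA : IsTorsionIdeal 𝔞 A) {f : A →ₗ[R] B} (hf : Function.Surjective f) :
    IsTorsionIdeal 𝔞 B := fun y ↦ by
  obtain ⟨x, rfl⟩ := hf y
  obtain ⟨n, hn⟩ := hA x
  exact ⟨n, fun a ha ↦ by rw [← map_smul, hn a ha, map_zero]⟩

lemma exists_pow_smul_eq_zero [Module.Finite R B] (hA : IsTorsionIdeal 𝔞 A) (f : B →ₗ[R] A) :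
    ∃ n : ℕ, ∀ a ∈ 𝔞 ^ n, ∀ b, a • f b = 0 := by
  obtain ⟨s, hs⟩ := Module.Finite.fg_top (R := R) (M := B)
  choose n hn using fun b ↦ hA (f b)
  refine ⟨s.sup n, fun a ha b ↦ ?_⟩
  have hb : b ∈ Submodule.span R (s : Set B) := hs ▸ Submodule.mem_top
  induction hb using Submodule.span_induction with
  | mem x hx => exact hn x a (Ideal.pow_le_pow_right (Finset.le_sup hx) ha)
  | zero => rw [map_zero, smul_zero]
  | add x y _ _ hx hy => rw [map_add, smul_add, hx, hy, add_zero]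
  | smul r x _ hx => rw [map_smul, smul_comm, hx, smul_zero]

/-- By Artin–Rees, `φ` is continuous for the topology induced on `N` by the `𝔞`-adic one. -/
lemma exists_forall_mem_pow_smul_eq_zero [IsNoetherianRing R] [Module.Finite R B]
    (hA : IsTorsionIdeal 𝔞 A) {N : Submodule R B} (φ : N →ₗ[R] A) :
    ∃ n : ℕ, ∀ x : N, (x : B) ∈ 𝔞 ^ n • (⊤ : Submodule R B) → φ x = 0 := by
  obtain ⟨k, hk⟩ := hA.exists_pow_smul_eq_zero φ
  obtain ⟨l, hl⟩ := Ideal.exists_pow_inf_eq_pow_smul 𝔞 N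
  refine ⟨k + l, fun x hx ↦ ?_⟩
  have hker : 𝔞 ^ k • (⊤ : Submodule R N) ≤ LinearMap.ker φ :=
    Submodule.smul_le.2 fun a ha y _ ↦ by rw [LinearMap.mem_ker, map_smul, hk a ha]
  have hmem : (x : B) ∈ (𝔞 ^ k • (⊤ : Submodule R N)).map N.subtype := by
    rw [Submodule.map_smul'', Submodule.map_subtype_top]
    have h : (x : B) ∈ 𝔞 ^ (k + l) • (⊤ : Submodule R B) ⊓ N := ⟨hx, x.2⟩
    rw [hl _ (Nat.le_add_left l k), Nat.add_sub_cancel] at h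
    exact Submodule.smul_mono le_rfl inf_le_right h
  exact hker ((N.injective_subtype.mem_set_image).1 hmem)

end IsTorsionIdeal

lemma primaryComponent_quotient_primaryComponent (h𝔞 : 𝔞.FG) :
    Ideal.primaryComponent (A ⧸ Ideal.primaryComponent A 𝔞) 𝔞 = ⊥ := by
  rw [eq_bot_iff]
  intro y hy
  obtain ⟨n, hn⟩ := mem_primaryComponent_iff.1 hy
  obtain ⟨x, rfl⟩ := Submodule.Quotient.mk_surjective _ y
  have : Module.Finite R ↥(𝔞 ^ n) := Module.Finite.iff_fg.2 h𝔞.pow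
  let φ : ↥(𝔞 ^ n) →ₗ[R] Ideal.primaryComponent A 𝔞 :=
    ((LinearMap.toSpanSingleton R A x).domRestrict (𝔞 ^ n)).codRestrict _ fun a ↦
      (Submodule.Quotient.mk_eq_zero _).1 (hn a a.2)
  obtain ⟨m, hm⟩ := (isTorsionIdeal_primaryComponent 𝔞 A).exists_pow_smul_eq_zero φ
  refine (Submodule.Quotient.mk_eq_zero _).2 (mem_primaryComponent_iff.2 ⟨m + n, fun a ha ↦ ?_⟩)
  have hle : 𝔞 ^ m * 𝔞 ^ n ≤ LinearMap.ker (LinearMap.toSpanSingleton R A x) :=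
    Ideal.mul_le.2 fun r hr s hs ↦
      (mul_smul r s x).trans (congrArg Subtype.val (hm r hr ⟨s, hs⟩))
  exact hle (pow_add 𝔞 m n ▸ ha)

end Torsion

section Injective

variable {R : Type u} [CommRing R] {A B E : Type u} [AddCommGroup A] [Module R A]
  [AddCommGroup B] [Module R B] [AddCommGroup E] [Module R E]

lemma exists_comp_eq_of_ker_le_ker [Module.Injective R E] {f : A →ₗ[R] B} {ψ : A →ₗ[R] E}
    (h : LinearMap.ker f ≤ LinearMap.ker ψ) : ∃ χ : B →ₗ[R] E, χ ∘ₗ f = ψ := by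
  obtain ⟨χ, hχ⟩ := Module.Injective.out ((LinearMap.ker f).liftQ f le_rfl)
    (LinearMap.ker_eq_bot.1 (Submodule.ker_liftQ_eq_bot' _ _ rfl)) ((LinearMap.ker f).liftQ ψ h)
  exact ⟨χ, LinearMap.ext fun x ↦ hχ (Submodule.Quotient.mk x)⟩

lemma injective_of_retract [Module.Injective R B] (s : A →ₗ[R] B) (r : B →ₗ[R] A)
    (h : r ∘ₗ s = LinearMap.id) : Module.Injective R A where
  out _ _ _ _ _ _ f hf g := by
    obtain ⟨χ, hχ⟩ := Module.Injective.out f hf (s ∘ₗ g)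
    exact ⟨r ∘ₗ χ, fun x ↦ (congrArg r (hχ x)).trans (LinearMap.congr_fun h (g x))⟩

variable (R A) in
lemma exists_injective_embedding :
    ∃ (E : ModuleCat.{u} R) (f : A →ₗ[R] E), Module.Injective R E ∧ Function.Injective f := by
  have : Injective (ModuleCat.of R ↑(Injective.under (ModuleCat.of R A))) :=
    Injective.injective_under _
  exact ⟨_, (Injective.ι (ModuleCat.of R A)).hom, Module.injective_module_of_injective_object R _,
    (ModuleCat.mono_iff_injective _).1 (Injective.ι_mono _)⟩

variable [IsNoetherianRing R] (𝔞 : Ideal R)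

variable (E) in
lemma injective_primaryComponent [Module.Injective R E] :
    Module.Injective R (Ideal.primaryComponent E 𝔞) := by
  refine Module.Baer.injective fun J φ ↦ ?_
  obtain ⟨n, hn⟩ :=
    (isTorsionIdeal_primaryComponent 𝔞 E).exists_forall_mem_pow_smul_eq_zero φ
  obtain ⟨χ, hχ⟩ := exists_comp_eq_of_ker_le_ker (f := (𝔞 ^ n).mkQ ∘ₗ J.subtype)
    (ψ := (Ideal.primaryComponent E 𝔞).subtype ∘ₗ φ) fun x hx ↦ by
      have hx' : (x : R) ∈ 𝔞 ^ n := (Submodule.Quotient.mk_eq_zero _).1 hx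
      rw [LinearMap.mem_ker, LinearMap.comp_apply, hn x (by simpa using hx'), map_zero]
  have hmem (r : R) : χ ((𝔞 ^ n).mkQ r) ∈ Ideal.primaryComponent E 𝔞 :=
    mem_primaryComponent_iff.2 ⟨n, fun a ha ↦ by
      rw [← map_smul, ← map_smul]
      exact (congrArg χ ((Submodule.Quotient.mk_eq_zero _).2 (Ideal.mul_mem_right r _ ha))).trans
        (map_zero χ)⟩
  exact ⟨(χ ∘ₗ (𝔞 ^ n).mkQ).codRestrict _ hmem,
    fun x hx ↦ Subtype.ext (LinearMap.congr_fun hχ ⟨x, hx⟩)⟩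

lemma injective_quotient_primaryComponent [Module.Injective R E] :
    Module.Injective R (E ⧸ Ideal.primaryComponent E 𝔞) := by
  have := injective_primaryComponent E 𝔞
  obtain ⟨p, hp⟩ := Module.Injective.out (Ideal.primaryComponent E 𝔞).subtype
    (Submodule.injective_subtype _) LinearMap.id
  refine injective_of_retract ((Ideal.primaryComponent E 𝔞).liftQ
    (LinearMap.id - (Ideal.primaryComponent E 𝔞).subtype ∘ₗ p) fun x hx ↦ ?_)
    (Submodule.mkQ _) (Submodule.linearMap_qext _ (LinearMap.ext fun x ↦ ?_))
  · exact sub_eq_zero.2 (congrArg Subtype.val (hp ⟨x, hx⟩)).symm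
  · refine (Submodule.Quotient.eq _).2 ?_
    have hsub : x - p x - x ∈ Ideal.primaryComponent E 𝔞 := by
      rw [sub_sub_cancel_left]
      exact neg_mem (p x).2
    exact hsub

lemma IsTorsionIdeal.exists_injective_embedding {𝔞 : Ideal R} (hA : IsTorsionIdeal 𝔞 A) :
    ∃ (E : ModuleCat.{u} R) (f : A →ₗ[R] E),
      IsTorsionIdeal 𝔞 E ∧ Module.Injective R E ∧ Function.Injective f := by
  obtain ⟨E, f, hE, hf⟩ := _root_.exists_injective_embedding R A
  refine ⟨ModuleCat.of R (Ideal.primaryComponent E 𝔞), f.codRestrict _ fun x ↦ ?_,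
    isTorsionIdeal_primaryComponent 𝔞 E, injective_primaryComponent E 𝔞,
    fun x y h ↦ hf (congrArg Subtype.val h)⟩
  have hx : x ∈ Ideal.primaryComponent A 𝔞 := mem_primaryComponent_iff.2 (hA x)
  exact Ideal.primaryComponent_map_mem 𝔞 f ⟨x, hx⟩

lemma exists_torsionFree_injective_embedding (hA : Ideal.primaryComponent A 𝔞 = ⊥) :
    ∃ (E : ModuleCat.{u} R) (f : A →ₗ[R] E),
      Ideal.primaryComponent E 𝔞 = ⊥ ∧ Module.Injective R E ∧ Function.Injective f := by
  obtain ⟨E, f, hE, hf⟩ := _root_.exists_injective_embedding R A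
  refine ⟨ModuleCat.of R (E ⧸ Ideal.primaryComponent E 𝔞), Submodule.mkQ _ ∘ₗ f,
    primaryComponent_quotient_primaryComponent (IsNoetherian.noetherian 𝔞),
    injective_quotient_primaryComponent 𝔞, (injective_iff_map_eq_zero _).2 fun x hx ↦ ?_⟩
  obtain ⟨n, hn⟩ := mem_primaryComponent_iff.1 ((Submodule.Quotient.mk_eq_zero _).1 hx)
  rw [← Submodule.mem_bot R, ← hA]
  exact mem_primaryComponent_iff.2 ⟨n, fun a ha ↦ hf (by rw [map_smul, hn a ha, map_zero])⟩

end Injective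

namespace LocalCohomologyLimit

open Abelian

variable {R : Type u} [CommRing R] {𝔞 : Ideal R} {A B C : Type u} [AddCommGroup A] [Module R A]
  [AddCommGroup B] [Module R B] [AddCommGroup C] [Module R C]

lemma zeroEval_surjective (hA : IsTorsionIdeal 𝔞 A) : Function.Surjective (zeroEval 𝔞 A) := by
  rw [← LinearMap.range_eq_top, range_zeroEval, ← isTorsionIdeal_iff_primaryComponent_eq_top]
  exact hA

lemma map_zero_surjective (hA : IsTorsionIdeal 𝔞 A) {f : A →ₗ[R] B}
    (hf : Function.Surjective f) : Function.Surjective (map 𝔞 0 f) := fun y ↦ by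
  obtain ⟨b, hb⟩ := hf (zeroEval 𝔞 B y)
  obtain ⟨x, rfl⟩ := zeroEval_surjective hA b
  exact ⟨x, zeroEval_injective 𝔞 ((zeroEval_map 𝔞 f x).trans hb)⟩

lemma subsingleton_zero (hA : Ideal.primaryComponent A 𝔞 = ⊥) :
    Subsingleton (LocalCohomologyLimit 𝔞 0 (ModuleCat.of R A)) := by
  rw [(zeroEquiv 𝔞 A).toEquiv.subsingleton_congr, hA]
  infer_instance

variable [IsNoetherianRing R]

lemma subsingleton_of_isTorsionIdeal (i : ℕ) (hA : IsTorsionIdeal 𝔞 A) :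
    Subsingleton (LocalCohomologyLimit 𝔞 (i + 1) (ModuleCat.of R A)) := by
  induction i using Nat.strong_induction_on generalizing A with
  | _ i ih =>
    obtain ⟨E, f, hE, _, hf⟩ := hA.exists_injective_embedding
    have hg := Submodule.mkQ_surjective (LinearMap.range f)
    have h := LinearMap.exact_map_mkQ_range f
    have : Injective (ModuleCat.of R E) := Module.injective_object_of_injective_module R _
    have := subsingleton_of_injective 𝔞 i (ModuleCat.of R E)
    have hsurj : Function.Surjective (map 𝔞 i (LinearMap.range f).mkQ) := by
      cases i with
      | zero => exact map_zero_surjective hE hg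
      | succ i =>
        have := ih i i.lt_succ_self (hE.of_surjective hg)
        exact fun y ↦ ⟨0, Subsingleton.elim _ _⟩
    refine subsingleton_of_forall_eq 0 fun z ↦ ?_
    obtain ⟨y, rfl⟩ := (exact_δ_map 𝔞 i h hf hg z).1 (Subsingleton.elim _ _)
    exact (exact_map_δ 𝔞 i h hf hg y).2 (hsurj y)

lemma exists_equiv_succ (hA : Ideal.primaryComponent A 𝔞 = ⊥) :
    ∃ L : ModuleCat.{u} R,
      (∀ i, Nonempty (LocalCohomologyLimit 𝔞 i L ≃ₗ[R]
        LocalCohomologyLimit 𝔞 (i + 1) (ModuleCat.of R A))) ∧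
      ∀ j, ExtFinite (ModuleCat.of R (R ⧸ 𝔞)) (j + 1) A →
        ExtFinite (ModuleCat.of R (R ⧸ 𝔞)) j L := by
  obtain ⟨E, f, hE, _, hf⟩ := exists_torsionFree_injective_embedding 𝔞 hA
  have hg := Submodule.mkQ_surjective (LinearMap.range f)
  have h := LinearMap.exact_map_mkQ_range f
  have : Injective (ModuleCat.of R E) := Module.injective_object_of_injective_module R _
  have hH : ∀ i, Subsingleton (LocalCohomologyLimit 𝔞 i (ModuleCat.of R E))
    | 0 => subsingleton_zero hE
    | i + 1 => subsingleton_of_injective 𝔞 i (ModuleCat.of R E)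
  have hExt : ∀ j, ExtFinite (ModuleCat.of R (R ⧸ 𝔞)) j E
    | 0 => by
      rw [extFinite_zero_iff, eq_bot_iff.2 (torsionBySet_le_primaryComponent.trans hE.le)]
      exact Submodule.fg_bot
    | j + 1 => by
      have : Subsingleton (Ext (ModuleCat.of R (R ⧸ 𝔞)) (ModuleCat.of R E) (j + 1)) :=
        subsingleton_of_forall_eq 0 fun x ↦ x.eq_zero_of_injective
      exact Module.Finite.of_finite
  refine ⟨ModuleCat.of R (E ⧸ LinearMap.range f), fun i ↦ ?_,
    fun j hj ↦ ExtFinite.right h hf hg (hExt j) hj⟩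
  have := hH i
  have := hH (i + 1)
  exact ⟨LinearEquiv.ofBijective (δ 𝔞 i h hf hg) (δ_bijective 𝔞 h hf hg)⟩

end LocalCohomologyLimit

section ChainCondition

/-- Once the diagonal is stationary, only finitely many rows have to be treated separately. -/
lemma exists_forall_eq_of_antitone {α : Type*} [PartialOrder α] [WellFoundedLT α]
    {d : ℕ → ℕ → α} (hrow : ∀ k, Antitone (d k)) (hcol : ∀ n, Antitone (d · n)) :
    ∃ n, ∀ m, n ≤ m → ∀ k, d k n = d k m := by
  have hdiag : Antitone fun n ↦ d n n := fun _ n h ↦ (hcol n h).trans (hrow _ h)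
  obtain ⟨n₁, hn₁⟩ := WellFoundedLT.antitone_chain_condition hdiag
  choose c hc using fun k ↦ WellFoundedLT.antitone_chain_condition (hrow k)
  refine ⟨max n₁ ((Finset.range n₁).sup c), fun m hm k ↦ ?_⟩
  obtain hk | hk := lt_or_ge k n₁
  · have hck : c k ≤ max n₁ ((Finset.range n₁).sup c) :=
      le_max_of_le_right (Finset.le_sup (Finset.mem_range.2 hk))
    rw [← hc k _ hck, ← hc k m (hck.trans hm)]
  · have hkm : d n₁ n₁ ≤ d k m := by
      rw [hn₁ (max k m) (hk.trans (le_max_left k m))]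
      exact (hcol _ (le_max_left k m)).trans (hrow k (le_max_right k m))
    exact le_antisymm (((hcol _ hk).trans (hrow n₁ (le_max_left _ _))).trans hkm) (hrow k hm)

end ChainCondition

section Artinian

variable {R : Type u} [CommRing R] {N : Type u} [AddCommGroup N] [Module R N]

/-- The submodule `xᵏB ∩ (0 :_N x)` of `(0 :_N x)`. If `N` is `x`-power torsion, then these
slices detect equality among nested submodules `B` of `N`. -/
def torsionBySlice (x : R) (k : ℕ) (B : Submodule R N) : Submodule R (Submodule.torsionBy R N x) :=
  (B.map (LinearMap.lsmul R N (x ^ k))).comap (Submodule.torsionBy R N x).subtype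

lemma mem_torsionBySlice {x : R} {k : ℕ} {B : Submodule R N} {y : Submodule.torsionBy R N x} :
    y ∈ torsionBySlice x k B ↔ ∃ b ∈ B, x ^ k • b = y := Iff.rfl

lemma torsionBySlice_mono (x : R) (k : ℕ) :
    Monotone (torsionBySlice x k : Submodule R N → Submodule R (Submodule.torsionBy R N x)) :=
  fun _ _ h ↦ Submodule.comap_mono (Submodule.map_mono h)

lemma torsionBySlice_anti (x : R) (B : Submodule R N) : Antitone (torsionBySlice x · B) := by
  intro k l h y hy
  obtain ⟨b, hb, hy⟩ := mem_torsionBySlice.1 hy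
  refine mem_torsionBySlice.2 ⟨x ^ (l - k) • b, B.smul_mem _ hb, ?_⟩
  rw [← mul_smul, ← pow_add, Nat.add_sub_cancel' h, hy]

lemma mem_of_torsionBySlice_le {x : R} {B C : Submodule R N} (hBC : B ≤ C)
    (h : ∀ k, torsionBySlice x k C ≤ torsionBySlice x k B) {k : ℕ} {c : N} (hc : c ∈ C)
    (hxc : x ^ k • c = 0) : c ∈ B := by
  induction k generalizing c with
  | zero =>
    rw [pow_zero, one_smul] at hxc
    exact hxc ▸ B.zero_mem
  | succ k ih =>
    have hT : x ^ k • c ∈ Submodule.torsionBy R N x := by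
      rw [Submodule.mem_torsionBy_iff, ← mul_smul, ← pow_succ', hxc]
    obtain ⟨b, hb, hbc⟩ :=
      mem_torsionBySlice.1 (h k ((mem_torsionBySlice (y := ⟨_, hT⟩)).2 ⟨c, hc, rfl⟩))
    have hcb := ih (C.sub_mem hc (hBC hb)) (by rw [smul_sub, hbc, sub_self])
    exact (B.sub_mem_iff_left hb).1 hcb

lemma isArtinian_of_torsionBy {x : R} (hN : ∀ y : N, ∃ k : ℕ, x ^ k • y = 0)
    [IsArtinian R (Submodule.torsionBy R N x)] : IsArtinian R N := by
  refine monotone_stabilizes_iff_artinian.1 fun f ↦ ?_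
  have hf {m n : ℕ} (h : m ≤ n) : (f n).ofDual ≤ (f m).ofDual := f.monotone h
  obtain ⟨n, hn⟩ := exists_forall_eq_of_antitone
    (d := fun k n ↦ torsionBySlice x k (f n).ofDual)
    (fun k _ _ h ↦ torsionBySlice_mono x k (hf h)) (fun n ↦ torsionBySlice_anti x (f n).ofDual)
  refine ⟨n, fun m hm ↦ le_antisymm (f.monotone hm) fun c hc ↦ ?_⟩
  obtain ⟨k, hk⟩ := hN c
  exact mem_of_torsionBySlice_le (hf hm) (fun k ↦ (hn m hm k).le) hc hk

lemma isArtinian_of_torsionBySet_finset {s : Finset R}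
    (hN : ∀ x ∈ s, ∀ y : N, ∃ k : ℕ, x ^ k • y = 0)
    [IsArtinian R (Submodule.torsionBySet R N (s : Set R))] : IsArtinian R N := by
  classical
  induction s using Finset.induction_on generalizing N with
  | empty =>
    have htop : Submodule.torsionBySet R N ((∅ : Finset R) : Set R) = ⊤ := by
      simp [Submodule.eq_top_iff']
    exact isArtinian_of_linearEquiv ((LinearEquiv.ofEq _ _ htop).trans Submodule.topEquiv)
  | insert x s _ ih =>
    have hmem (y : Submodule.torsionBySet R (Submodule.torsionBy R N x) (s : Set R)) :
        ((y : Submodule.torsionBy R N x) : N) ∈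
          Submodule.torsionBySet R N ((insert x s : Finset R) : Set R) := by
      rw [Submodule.mem_torsionBySet_iff]
      rintro ⟨a, ha⟩
      obtain rfl | ha := Finset.mem_insert.1 (Finset.mem_coe.1 ha)
      · exact Submodule.smul_coe_torsionBy (R := R) a y.1
      · exact congrArg Subtype.val ((Submodule.mem_torsionBySet_iff _ _).1 y.2 ⟨a, ha⟩)
    have : IsArtinian R (Submodule.torsionBySet R (Submodule.torsionBy R N x) (s : Set R)) :=
      isArtinian_of_injective (((Submodule.torsionBy R N x).subtype ∘ₗ
        Submodule.subtype _).codRestrict _ hmem)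
        fun y z h ↦ Subtype.ext (Subtype.ext (congrArg Subtype.val h :))
    have : IsArtinian R (Submodule.torsionBy R N x) := ih fun z hz y ↦ by
      obtain ⟨k, hk⟩ := hN z (Finset.mem_insert_of_mem hz) y
      exact ⟨k, Subtype.ext hk⟩
    exact isArtinian_of_torsionBy (hN x (Finset.mem_insert_self x s))

lemma IsTorsionIdeal.isArtinian {𝔟 : Ideal R} (hN : IsTorsionIdeal 𝔟 N) (hb : 𝔟.FG)
    [hT : IsArtinian R (Submodule.torsionBySet R N 𝔟)] : IsArtinian R N := by
  obtain ⟨s, rfl⟩ := hb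
  rw [Ideal.span, ← Submodule.torsionBySet_eq_torsionBySet_span] at hT
  refine isArtinian_of_torsionBySet_finset (s := s) fun x hx y ↦ ?_
  obtain ⟨k, hk⟩ := hN y
  exact ⟨k, hk _ (Ideal.pow_mem_pow (Ideal.subset_span hx) k)⟩

lemma nilpotent_or_surjective_of_supIrred_top [IsArtinian R N]
    (h : SupIrred (⊤ : Submodule R N)) (f : Module.End R N) :
    IsNilpotent f ∨ Function.Surjective f := by
  obtain ⟨n, hn, hn1⟩ :=
    (f.eventually_codisjoint_ker_pow_range_pow.and (Filter.eventually_ge_atTop 1)).exists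
  refine (h.2 hn.eq_top).imp (fun hker ↦ ⟨n, LinearMap.ker_eq_top.1 hker⟩) fun hrange ↦ ?_
  obtain ⟨k, rfl⟩ := Nat.exists_eq_add_of_le' hn1
  rw [LinearMap.range_eq_top, pow_succ', Module.End.mul_eq_comp, LinearMap.coe_comp] at hrange
  exact hrange.of_comp

lemma mem_radical_annihilator_iff_isNilpotent_algebraMap {x : R} :
    x ∈ (Module.annihilator R N).radical ↔ IsNilpotent (algebraMap R (Module.End R N) x) := by
  simp only [Ideal.mem_radical_iff, Module.mem_annihilator, IsNilpotent, LinearMap.ext_iff,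
    ← map_pow, Module.algebraMap_end_apply, LinearMap.zero_apply]

lemma isPrime_radical_annihilator_of_supIrred_top [IsArtinian R N]
    (h : SupIrred (⊤ : Submodule R N)) : (Module.annihilator R N).radical.IsPrime := by
  refine ⟨fun htop ↦ h.ne_bot ?_, fun {x y} hxy ↦ ?_⟩
  · rw [Ideal.radical_eq_top, Module.annihilator_eq_top_iff] at htop
    exact Subsingleton.elim _ _
  · simp only [mem_radical_annihilator_iff_isNilpotent_algebraMap] at hxy ⊢
    refine (nilpotent_or_surjective_of_supIrred_top h _).imp_right fun hx ↦ ?_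
    obtain ⟨n, hn⟩ := hxy
    refine ⟨n, LinearMap.ext fun z ↦ ?_⟩
    obtain ⟨w, rfl⟩ := hx.iterate n z
    rw [← Module.End.coe_pow, ← Module.End.mul_apply, ← map_pow, ← map_pow, ← map_mul, ← mul_pow,
      mul_comm, map_pow, hn, LinearMap.zero_apply, LinearMap.zero_apply]

end Artinian

section GenericFilter

variable {R : Type u} [CommRing R]

/-- The filter of general elements of the ideal `𝔞`: a property holds eventually along it if it
holds for all `x ∈ 𝔞` outside finitely many prime ideals, none of which contains `𝔞`. It makes it
possible to impose successive conditions on `x` without naming the primes to be avoided. -/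
def genericFilter (𝔞 : Ideal R) : Filter R :=
  (⨅ q : {q : PrimeSpectrum R // ¬ 𝔞 ≤ q.asIdeal}, Filter.principal (q.1.asIdeal : Set R)ᶜ) ⊓
    Filter.principal 𝔞

variable {𝔞 : Ideal R}

lemma eventually_mem_genericFilter : ∀ᶠ x in genericFilter 𝔞, x ∈ 𝔞 :=
  Filter.mem_inf_of_right (Filter.mem_principal_self _)

lemma eventually_notMem_genericFilter {q : Ideal R} [hq : q.IsPrime] (h : ¬ 𝔞 ≤ q) :
    ∀ᶠ x in genericFilter 𝔞, x ∉ q :=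
  Filter.mem_inf_of_left (Filter.mem_iInf_of_mem ⟨⟨q, hq⟩, h⟩ (Filter.mem_principal_self _))

lemma frequently_notMem_genericFilter {I : Ideal R} (hI : ¬ 𝔞 ≤ I) :
    ∃ᶠ x in genericFilter 𝔞, x ∉ I := by
  intro h
  rw [genericFilter, Filter.eventually_inf_principal,
    (Filter.hasBasis_iInf_principal_finite _).eventually_iff] at h
  obtain ⟨t, ht, h⟩ := h
  have hcover : (𝔞 : Set R) ⊆ ⋃ J ∈ insert I ((·.1.asIdeal) '' t), (J : Set R) := fun x hx ↦ by
    by_contra hx'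
    simp only [Set.biUnion_insert, Set.biUnion_image, Set.mem_union, Set.mem_iUnion, not_or,
      not_exists] at hx'
    exact h (Set.mem_iInter₂.2 hx'.2) hx hx'.1
  obtain ⟨J, hJ, hle⟩ := (Ideal.subset_union_prime_finite ((ht.image _).insert I)
    (f := fun J : Ideal R ↦ J) I I fun J hJ hne _ ↦ by
      obtain ⟨q, -, rfl⟩ := hJ.resolve_left hne
      exact q.1.isPrime).1 hcover
  obtain rfl | ⟨q, -, rfl⟩ := hJ
  · exact hI hle
  · exact q.2 hle

lemma tendsto_algebraMap_genericFilter (S : Type*) [CommRing S] [Algebra R S] :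
    Filter.Tendsto (algebraMap R S) (genericFilter 𝔞)
      (genericFilter (𝔞.map (algebraMap R S))) := by
  refine Filter.tendsto_inf.2 ⟨Filter.tendsto_iInf.2 fun q ↦ Filter.tendsto_principal.2 ?_,
    Filter.tendsto_principal.2 (eventually_mem_genericFilter.mono fun x hx ↦
      Ideal.mem_map_of_mem _ hx)⟩
  exact eventually_notMem_genericFilter (q := q.1.asIdeal.comap (algebraMap R S))
    fun h ↦ q.2 (Ideal.map_le_iff_le_comap.2 h)

end GenericFilter

section GenericCokernel

variable {R : Type u} [CommRing R] {N : Type u} [AddCommGroup N] [Module R N]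

lemma supIrred_top_of_supIrred {S : Submodule R N} (hS : SupIrred S) :
    SupIrred (⊤ : Submodule R S) := by
  refine ⟨fun h ↦ hS.ne_bot ?_, fun A B h ↦ ?_⟩
  · rw [← S.map_subtype_top, h.eq_bot, Submodule.map_bot]
  · have hsup : A.map S.subtype ⊔ B.map S.subtype = S := by
      rw [← Submodule.map_sup, h, S.map_subtype_top]
    have eq_top {C : Submodule R S} (hC : C.map S.subtype = S) : C = ⊤ :=
      Submodule.map_injective_of_injective S.injective_subtype (hC.trans S.map_subtype_top.symm)
    exact (hS.2 hsup).imp eq_top eq_top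

variable [IsNoetherianRing R]

lemma fg_torsionBySet_mul {I J : Ideal R} (hI : (Submodule.torsionBySet R N I).FG)
    (hJ : (Submodule.torsionBySet R N J).FG) : (Submodule.torsionBySet R N ↑(I * J)).FG := by
  obtain ⟨s, rfl⟩ := IsNoetherian.noetherian I
  let f : N →ₗ[R] s → N := LinearMap.pi fun a ↦ LinearMap.lsmul R N a
  refine Submodule.fg_of_fg_map_of_fg_inf_ker f ?_ ?_
  · refine (Submodule.fg_pi fun _ : s ↦ hJ).of_le ?_
    rintro _ ⟨y, hy, rfl⟩ a -
    refine (Submodule.mem_torsionBySet_iff _ _).2 fun b ↦ ?_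
    rw [LinearMap.pi_apply, LinearMap.lsmul_apply, smul_smul, mul_comm]
    exact (Submodule.mem_torsionBySet_iff _ _).1 hy
      ⟨_, Ideal.mul_mem_mul (Ideal.subset_span a.2) b.2⟩
  · refine hI.of_le fun y hy ↦ ?_
    refine (Submodule.torsionBySet_eq_torsionBySet_span (s : Set R)).le ?_
    exact (Submodule.mem_torsionBySet_iff _ _).2 fun a ↦ congrFun (LinearMap.mem_ker.1 hy.2) a

lemma fg_torsionBySet_pow {I : Ideal R} (hI : (Submodule.torsionBySet R N I).FG) (k : ℕ) :
    (Submodule.torsionBySet R N ↑(I ^ k)).FG := by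
  induction k with
  | zero => simpa using Submodule.fg_bot
  | succ k ih => exact pow_succ I k ▸ fg_torsionBySet_mul ih hI

lemma finite_or_eventually_surjective_lsmul [IsArtinian R N] (h : SupIrred (⊤ : Submodule R N))
    {𝔟 : Ideal R} (hT : (Submodule.torsionBySet R N 𝔟).FG) :
    Module.Finite R N ∨
      ∀ᶠ x in genericFilter 𝔟, Function.Surjective (LinearMap.lsmul R N x) := by
  have := isPrime_radical_annihilator_of_supIrred_top h
  by_cases hle : 𝔟 ≤ (Module.annihilator R N).radical
  · obtain ⟨n, hn⟩ := Ideal.exists_pow_le_of_le_radical_of_fg hle (IsNoetherian.noetherian 𝔟)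
    refine .inl ⟨(fg_torsionBySet_pow hT n).of_le fun y _ ↦ ?_⟩
    exact (Submodule.mem_torsionBySet_iff _ _).2 fun a ↦ Module.mem_annihilator.1 (hn a.2) y
  · refine .inr ((eventually_notMem_genericFilter hle).mono fun x hx ↦ ?_)
    rw [mem_radical_annihilator_iff_isNilpotent_algebraMap] at hx
    exact (nilpotent_or_surjective_of_supIrred_top h _).resolve_left hx

lemma eventually_finite_coker_of_isArtinian [IsArtinian R N] {𝔟 : Ideal R}
    (hT : (Submodule.torsionBySet R N 𝔟).FG) :
    ∀ᶠ x in genericFilter 𝔟,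
      Module.Finite R (N ⧸ LinearMap.range (LinearMap.lsmul R N x)) := by
  obtain ⟨s, hs, hs'⟩ := exists_supIrred_decomposition (⊤ : Submodule R N)
  have key : ∀ᶠ x in genericFilter 𝔟, ∀ S ∈ s,
      (S.map (LinearMap.range (LinearMap.lsmul R N x)).mkQ).FG := by
    refine (Filter.eventually_all_finset s).2 fun S hS ↦ ?_
    have hTS : (Submodule.torsionBySet R S 𝔟).FG := (extFinite_zero_iff 𝔟).1
      (ExtFinite.of_injective S.injective_subtype ((extFinite_zero_iff 𝔟).2 hT))
    obtain hfin | hsurj :=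
      finite_or_eventually_surjective_lsmul (supIrred_top_of_supIrred (hs' hS)) hTS
    · exact .of_forall fun x ↦ (Module.Finite.iff_fg.1 hfin).map _
    · refine hsurj.mono fun x hx ↦ ?_
      have hle : S ≤ LinearMap.range (LinearMap.lsmul R N x) := fun y hy ↦
        let ⟨z, hz⟩ := hx ⟨y, hy⟩
        ⟨z, congrArg Subtype.val hz⟩
      rw [← Submodule.ker_mkQ (LinearMap.range _), LinearMap.le_ker_iff_map] at hle
      exact hle ▸ Submodule.fg_bot
  refine key.mono fun x hx ↦ ⟨?_⟩
  have htop := congrArg (Submodule.map (LinearMap.range (LinearMap.lsmul R N x)).mkQ) hs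
  simp only [Finset.sup_eq_iSup, Submodule.map_iSup, id, Submodule.map_top,
    Submodule.range_mkQ] at htop
  exact htop ▸ Submodule.fg_biSup s _ hx

lemma isArtinian_of_forall_support_isMaximal [Module.Finite R N]
    (h : ∀ p ∈ Module.support R N, p.asIdeal.IsMaximal) : IsArtinian R N := by
  induction ‹Module.Finite R N› using
    IsNoetherianRing.induction_on_isQuotientEquivQuotientPrime R with
  | subsingleton N => infer_instance
  | quotient N p e =>
    have hp : p.asIdeal.IsMaximal := h p (by
      rw [e.support_eq, Module.support_eq_zeroLocus, Ideal.annihilator_quotient]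
      exact (le_rfl : p.asIdeal ≤ p.asIdeal))
    have : IsSimpleModule R (R ⧸ p.asIdeal) := isSimpleModule_iff_isCoatom.2 hp.out
    exact isArtinian_of_linearEquiv e.symm
  | exact N₁ N₂ N₃ f g hf hg hfg h₁ h₃ =>
    have := h₁ fun p hp ↦ h p (Module.support_subset_of_injective f hf hp)
    have := h₃ fun p hp ↦ h p (Module.support_subset_of_surjective g hg hp)
    exact isArtinian_of_range_eq_ker f g (LinearMap.exact_iff.1 hfg).symm

lemma IsTorsionIdeal.eventually_finite_coker {𝔟 : Ideal R} (hN : IsTorsionIdeal 𝔟 N)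
    (hs : ∀ p ∈ Module.support R N, p.asIdeal.IsMaximal)
    (hT : (Submodule.torsionBySet R N 𝔟).FG) :
    ∀ᶠ x in genericFilter 𝔟,
      Module.Finite R (N ⧸ LinearMap.range (LinearMap.lsmul R N x)) := by
  have : Module.Finite R (Submodule.torsionBySet R N 𝔟) := Module.Finite.iff_fg.2 hT
  have : IsArtinian R (Submodule.torsionBySet R N 𝔟) :=
    isArtinian_of_forall_support_isMaximal fun p hp ↦
      hs p (Module.support_subset_of_injective _ (Submodule.injective_subtype _) hp)
  have := hN.isArtinian (IsNoetherian.noetherian 𝔟)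
  exact eventually_finite_coker_of_isArtinian hT

end GenericCokernel

section Localization

lemma IsTorsionIdeal.of_isLocalizedModule {R R' N N' : Type u} [CommRing R] [CommRing R']
    [Algebra R R'] [AddCommGroup N] [Module R N] [AddCommGroup N'] [Module R N'] [Module R' N']
    [IsScalarTower R R' N'] (S : Submonoid R) (f : N →ₗ[R] N') [IsLocalizedModule S f]
    {𝔞 : Ideal R} (hN : IsTorsionIdeal 𝔞 N) : IsTorsionIdeal (𝔞.map (algebraMap R R')) N' := by
  intro z
  obtain ⟨⟨n, s⟩, rfl⟩ := IsLocalizedModule.mk'_surjective S f z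
  obtain ⟨k, hk⟩ := hN n
  refine ⟨k, ?_⟩
  rw [← Ideal.map_pow]
  suffices h : (𝔞 ^ k).map (algebraMap R R') ≤
      Ideal.torsionOf R' N' (IsLocalizedModule.mk' f n s) from fun a ha ↦ h ha
  refine Ideal.map_le_iff_le_comap.2 fun a ha ↦ ?_
  rw [Ideal.mem_comap, Ideal.mem_torsionOf_iff, algebraMap_smul, ← IsLocalizedModule.mk'_smul,
    hk a ha, IsLocalizedModule.mk'_zero]

section Submonoid

variable {R : Type*} [CommRing R] {N : Type*} [AddCommGroup N] [Module R N]

variable (R' : Type*) [CommRing R'] [Algebra R R'] (S : Submonoid R)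
  {N' : Type*} [AddCommGroup N'] [Module R N'] [Module R' N'] [IsScalarTower R R' N']
  (f : N →ₗ[R] N') [IsLocalizedModule S f]

include S f in
lemma comap_mem_support_of_isLocalizedModule {q : PrimeSpectrum R'}
    (hq : q ∈ Module.support R' N') : q.comap (algebraMap R R') ∈ Module.support R N := by
  rw [Module.mem_support_iff'] at hq ⊢
  obtain ⟨z, hz⟩ := hq
  obtain ⟨⟨n, s⟩, rfl⟩ := IsLocalizedModule.mk'_surjective S f z
  refine ⟨n, fun r hr h0 ↦ hz (algebraMap R R' r) hr ?_⟩
  rw [Function.uncurry_apply_pair, algebraMap_smul, ← IsLocalizedModule.mk'_smul, h0,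
    IsLocalizedModule.mk'_zero]

variable [IsLocalization S R']

lemma extendScalars_map_lsmul (x : R) :
    (IsLocalizedModule.map S f f (LinearMap.lsmul R N x)).extendScalarsOfIsLocalization S R' =
      LinearMap.lsmul R' N' (algebraMap R R' x) := by
  ext z
  obtain ⟨⟨n, s⟩, rfl⟩ := IsLocalizedModule.mk'_surjective S f z
  simp [IsLocalizedModule.map_mk', IsLocalizedModule.mk'_smul]

lemma localized'_range_lsmul (x : R) :
    (LinearMap.range (LinearMap.lsmul R N x)).localized' R' S f =
      LinearMap.range (LinearMap.lsmul R' N' (algebraMap R R' x)) := by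
  rw [LinearMap.localized'_range_eq_range_localizedMap R' S f f, extendScalars_map_lsmul]

lemma localized'_torsionBy (x : R) :
    (Submodule.torsionBy R N x).localized' R' S f =
      Submodule.torsionBy R' N' (algebraMap R R' x) := by
  have h := LinearMap.localized'_ker_eq_ker_localizedMap R' S f f (LinearMap.lsmul R N x)
  rwa [extendScalars_map_lsmul] at h

lemma torsionBySet_finset_eq_inf (s : Finset R) :
    Submodule.torsionBySet R N (s : Set R) = s.inf (Submodule.torsionBy R N) := by
  ext y
  simp [Submodule.mem_finsetInf]

lemma localized'_torsionBySet {I : Ideal R} (hI : I.FG) :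
    (Submodule.torsionBySet R N I).localized' R' S f =
      Submodule.torsionBySet R' N' (I.map (algebraMap R R')) := by
  classical
  obtain ⟨s, rfl⟩ := hI
  rw [Ideal.map_span, ← Finset.coe_image, ← Submodule.torsionBySet_eq_torsionBySet_span,
    ← Submodule.torsionBySet_eq_torsionBySet_span, torsionBySet_finset_eq_inf,
    torsionBySet_finset_eq_inf, Finset.inf_image]
  exact (map_finset_inf (Submodule.localized'FrameHom R' S f) s _).trans
    (Finset.inf_congr rfl fun x _ ↦ localized'_torsionBy R' S f x)

lemma exists_fg_localized'_eq_top [Module.Finite R' N'] :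
    ∃ L : Submodule R N, L.FG ∧ L.localized' R' S f = ⊤ := by
  obtain ⟨s, hs⟩ := Module.Finite.fg_top (R := R') (M := N')
  choose num hnum using fun y : N' ↦ IsLocalizedModule.mk'_surjective S f y
  refine ⟨Submodule.span R ((fun y ↦ (num y).1) '' s),
    Submodule.fg_span (s.finite_toSet.image _), ?_⟩
  rw [← top_le_iff, ← hs]
  exact Submodule.span_le.2 fun y hy ↦
    ⟨(num y).1, Submodule.subset_span ⟨y, hy, rfl⟩, (num y).2, hnum y⟩

end Submonoid

section AtPrime

variable {R : Type u} [CommRing R] {N : Type u} [AddCommGroup N] [Module R N]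
  (p : PrimeSpectrum R)

lemma exists_fg_notMem_support_quotient
    [Module.Finite (Localization.AtPrime p.asIdeal) (LocalizedModule p.asIdeal.primeCompl N)] :
    ∃ L : Submodule R N, L.FG ∧ p ∉ Module.support R (N ⧸ L) := by
  obtain ⟨L, hL, htop⟩ := exists_fg_localized'_eq_top (Localization.AtPrime p.asIdeal)
    p.asIdeal.primeCompl (LocalizedModule.mkLinearMap p.asIdeal.primeCompl N)
  have := Submodule.Quotient.subsingleton_iff.2 htop
  exact ⟨L, hL, Module.notMem_support_iff.2
    (localizedQuotientEquiv p.asIdeal.primeCompl L).symm.subsingleton⟩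

variable {p}

lemma isMaximal_of_mem_support_localization (hp : ∀ q ∈ Module.support R N, q ≤ p → q = p)
    {q : PrimeSpectrum (Localization.AtPrime p.asIdeal)}
    (hq : q ∈ Module.support (Localization.AtPrime p.asIdeal)
      (LocalizedModule p.asIdeal.primeCompl N)) : q.asIdeal.IsMaximal := by
  have hle : q.comap (algebraMap R (Localization.AtPrime p.asIdeal)) ≤ p :=
    (Ideal.comap_mono (IsLocalRing.le_maximalIdeal q.isPrime.ne_top)).trans
      (Localization.AtPrime.under_maximalIdeal (I := p.asIdeal)).le
  have hcomap := hp _ (comap_mem_support_of_isLocalizedModule _ p.asIdeal.primeCompl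
    (LocalizedModule.mkLinearMap p.asIdeal.primeCompl N) hq) hle
  rw [Localization.AtPrime.eq_maximalIdeal_iff_under_eq.1 (congrArg PrimeSpectrum.asIdeal hcomap)]
  infer_instance

lemma IsTorsionIdeal.eventually_exists_fg_notMem_support [IsNoetherianRing R] {𝔞 : Ideal R}
    (hN : IsTorsionIdeal 𝔞 N) (hp : ∀ q ∈ Module.support R N, q ≤ p → q = p)
    (hT : (Submodule.torsionBySet R N 𝔞).FG) :
    ∀ᶠ x in genericFilter 𝔞,
      ∃ L : Submodule R (N ⧸ LinearMap.range (LinearMap.lsmul R N x)),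
        L.FG ∧ p ∉ Module.support R ((N ⧸ LinearMap.range (LinearMap.lsmul R N x)) ⧸ L) := by
  let R' := Localization.AtPrime p.asIdeal
  let f := LocalizedModule.mkLinearMap p.asIdeal.primeCompl N
  have hT' : (Submodule.torsionBySet R' (LocalizedModule p.asIdeal.primeCompl N)
      (𝔞.map (algebraMap R R'))).FG :=
    localized'_torsionBySet R' p.asIdeal.primeCompl f (IsNoetherian.noetherian 𝔞) ▸
      Submodule.localized'_fg R' p.asIdeal.primeCompl f hT
  have hfin := (hN.of_isLocalizedModule (R' := R') p.asIdeal.primeCompl f).eventually_finite_coker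
    (fun q hq ↦ isMaximal_of_mem_support_localization hp hq) hT'
  filter_upwards [(tendsto_algebraMap_genericFilter R').eventually hfin] with x hx
  rw [← localized'_range_lsmul R' p.asIdeal.primeCompl f x] at hx
  have := Module.Finite.equiv (localizedQuotientEquiv p.asIdeal.primeCompl
    (LinearMap.range (LinearMap.lsmul R N x)))
  exact exists_fg_notMem_support_quotient p

end AtPrime

end Localization

section Support

variable {R : Type u} [CommRing R] {𝔞 : Ideal R} {N : Type u} [AddCommGroup N] [Module R N]

lemma pow_smul_eq_zero_of_mem_annihilator_torsionBySet {s : R}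
    (hs : s ∈ Module.annihilator R (Submodule.torsionBySet R N 𝔞)) (k : ℕ) {m : N}
    (hm : ∀ a ∈ 𝔞 ^ k, a • m = 0) : s ^ k • m = 0 := by
  induction k generalizing m with
  | zero => simpa using hm 1 (by simp)
  | succ k ih =>
    have hmem : s ^ k • m ∈ Submodule.torsionBySet R N 𝔞 := by
      refine (Submodule.mem_torsionBySet_iff _ _).2 fun a ↦ ?_
      refine (smul_comm (a : R) (s ^ k) m).trans (ih fun b hb ↦ ?_)
      rw [smul_smul]
      exact hm _ (pow_succ 𝔞 k ▸ Ideal.mul_mem_mul hb a.2)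
    rw [pow_succ', mul_smul]
    exact congrArg Subtype.val (Module.mem_annihilator.1 hs ⟨_, hmem⟩)

lemma IsTorsionIdeal.support_subset_zeroLocus_annihilator (hN : IsTorsionIdeal 𝔞 N) :
    Module.support R N ⊆ PrimeSpectrum.zeroLocus
      (Module.annihilator R (Submodule.torsionBySet R N 𝔞) : Set R) := by
  intro p hp s hs
  obtain ⟨m, hm⟩ := Module.mem_support_iff_exists_annihilator.1 hp
  obtain ⟨k, hk⟩ := hN m
  exact p.isPrime.mem_of_pow_mem k <| hm <| (Submodule.mem_annihilator_span_singleton _ _).2 <|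
    pow_smul_eq_zero_of_mem_annihilator_torsionBySet hs k hk

lemma IsTorsionIdeal.support_subset_zeroLocus (hN : IsTorsionIdeal 𝔞 N) :
    Module.support R N ⊆ PrimeSpectrum.zeroLocus (𝔞 : Set R) :=
  hN.support_subset_zeroLocus_annihilator.trans <| PrimeSpectrum.zeroLocus_anti_mono fun a ha ↦
    Module.mem_annihilator.2 fun y ↦
      Subtype.ext ((Submodule.mem_torsionBySet_iff _ _).1 y.2 ⟨a, ha⟩)

lemma moduleDim_le_of_injective {A B : Type u} [AddCommGroup A] [Module R A] [AddCommGroup B]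
    [Module R B] (f : A →ₗ[R] B) (hf : Function.Injective f) : moduleDim R A ≤ moduleDim R B :=
  Order.krullDim_le_of_strictMono (Set.inclusion (Module.support_subset_of_injective f hf))
    fun _ _ h ↦ h

lemma eq_of_le_of_moduleDim_le_one (hdim : moduleDim R N ≤ 1) {q p : PrimeSpectrum R}
    (hq : q ∈ Module.support R N) (hp : ¬ p.asIdeal.IsMaximal) (hqp : q ≤ p) : q = p := by
  obtain ⟨m, hm, hpm⟩ := Ideal.exists_le_maximal p.asIdeal p.isPrime.ne_top
  let m' : PrimeSpectrum R := ⟨m, hm.isPrime⟩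
  have hps := Module.mem_support_mono hqp hq
  have hms : m' ∈ Module.support R N := Module.mem_support_mono hpm hps
  rcases Order.krullDim_le_one_iff.1 hdim ⟨p, hps⟩ with hmin | hmax
  · exact hqp.antisymm (hmin (b := ⟨q, hq⟩) hqp)
  · have hpm' : p = m' := le_antisymm hpm (hmax (b := ⟨m', hms⟩) hpm)
    exact absurd (hpm' ▸ hm) hp

lemma IsTorsionIdeal.finite_support_nonmaximal [IsNoetherianRing R] (hN : IsTorsionIdeal 𝔞 N)
    (hT : (Submodule.torsionBySet R N 𝔞).FG) (hdim : moduleDim R N ≤ 1) :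
    {p ∈ Module.support R N | ¬ p.asIdeal.IsMaximal}.Finite := by
  let T := Submodule.torsionBySet R N 𝔞
  have : Module.Finite R T := Module.Finite.iff_fg.2 hT
  refine (((Module.annihilator R T).finite_minimalPrimes_of_isNoetherianRing R).preimage
    (f := PrimeSpectrum.asIdeal) fun p _ q _ h ↦ PrimeSpectrum.ext h).subset ?_
  rintro p ⟨hp, hpmax⟩
  obtain ⟨q, hq, hqp⟩ := Ideal.exists_minimalPrimes_le (J := p.asIdeal)
    (hN.support_subset_zeroLocus_annihilator hp)
  have hqN : (⟨q, hq.1.1⟩ : PrimeSpectrum R) ∈ Module.support R N :=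
    Module.support_subset_of_injective _ T.injective_subtype
      (Module.mem_support_iff_of_finite.2 hq.1.2)
  rw [Set.mem_preimage, ← eq_of_le_of_moduleDim_le_one hdim hqN hpmax hqp]
  exact hq

lemma exists_fg_forall_notMem_support_quotient {s : Set (PrimeSpectrum R)} (hs : s.Finite)
    (h : ∀ p ∈ s, ∃ L : Submodule R N, L.FG ∧ p ∉ Module.support R (N ⧸ L)) :
    ∃ L : Submodule R N, L.FG ∧ ∀ p ∈ s, p ∉ Module.support R (N ⧸ L) := by
  choose! L hL hp using h
  refine ⟨⨆ p ∈ hs.toFinset, L p,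
    Submodule.fg_biSup _ L fun p h ↦ hL p (hs.mem_toFinset.1 h), fun p hps hmem ↦ hp p hps ?_⟩
  have hle : L p ≤ ⨆ p ∈ hs.toFinset, L p :=
    le_iSup₂ (f := fun p _ ↦ L p) p (hs.mem_toFinset.2 hps)
  exact Module.support_subset_of_surjective _ (Submodule.factor_surjective hle) hmem

lemma IsTorsionIdeal.eventually_exists_fg_support_quotient_isMaximal [IsNoetherianRing R]
    (hN : IsTorsionIdeal 𝔞 N) (hdim : moduleDim R N ≤ 1)
    (hT : (Submodule.torsionBySet R N 𝔞).FG) :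
    ∀ᶠ x in genericFilter 𝔞,
      ∃ L : Submodule R (N ⧸ LinearMap.range (LinearMap.lsmul R N x)), L.FG ∧
        ∀ p ∈ Module.support R ((N ⧸ LinearMap.range (LinearMap.lsmul R N x)) ⧸ L),
          p.asIdeal.IsMaximal := by
  have hfin := hN.finite_support_nonmaximal hT hdim
  have hlocal := (Filter.eventually_all_finite hfin).2 fun p hp ↦
    hN.eventually_exists_fg_notMem_support
      (fun q hq hqp ↦ eq_of_le_of_moduleDim_le_one hdim hq hp.2 hqp) hT
  filter_upwards [hlocal] with x hx
  obtain ⟨L, hL, hsupp⟩ := exists_fg_forall_notMem_support_quotient hfin hx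
  refine ⟨L, hL, fun p hp ↦ by_contra fun hmax ↦ hsupp p ⟨?_, hmax⟩ hp⟩
  exact Module.support_subset_of_surjective _ (Submodule.mkQ_surjective _)
    (Module.support_subset_of_surjective _ L.mkQ_surjective hp)

end Support

section Cofinite

variable {R : Type u} [CommRing R]

namespace ExtFinite

variable [IsNoetherianRing R] {A B : Type u} [AddCommGroup A] [Module R A] [AddCommGroup B]
  [Module R B] {X : ModuleCat.{u} R} {f : A →ₗ[R] B}

lemma ker_one (hA : ExtFinite X 1 A) (hB : ExtFinite X 0 B) :
    ExtFinite X 1 (LinearMap.ker f) :=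
  left (LinearMap.exact_iff.2 (by rw [f.ker_rangeRestrict, Submodule.range_subtype]))
    (LinearMap.ker f).injective_subtype f.surjective_rangeRestrict
    (of_injective (LinearMap.range f).injective_subtype hB) hA

lemma coker {j : ℕ} (hker : ExtFinite X (j + 2) (LinearMap.ker f)) (hA : ExtFinite X (j + 1) A)
    (hB : ExtFinite X j B) : ExtFinite X j (B ⧸ LinearMap.range f) :=
  right (LinearMap.exact_subtype_mkQ _) (LinearMap.range f).injective_subtype
    (LinearMap.range f).mkQ_surjective hB <|
    right (LinearMap.exact_iff.2 (by rw [f.ker_rangeRestrict, Submodule.range_subtype]))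
      (LinearMap.ker f).injective_subtype f.surjective_rangeRestrict hA hker

end ExtFinite

variable [IsNoetherianRing R] {𝔞 : Ideal R} {N : Type u} [AddCommGroup N] [Module R N]

/-- Noetherian induction on the annihilator of `N`: if it does not contain `𝔞`, then some general
`x ∈ 𝔞` lies outside it, and the kernel of `x` has a larger annihilator. -/
lemma extFinite_of_eventually_ker_coker
    {P : ∀ (N : Type u) [AddCommGroup N] [Module R N], Prop}
    (hzero : ∀ (N : Type u) [AddCommGroup N] [Module R N], P N →
      ExtFinite (ModuleCat.of R (R ⧸ 𝔞)) 0 N)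
    (hstep : ∀ (N : Type u) [AddCommGroup N] [Module R N], P N → ∀ᶠ x in genericFilter 𝔞,
      P (LinearMap.ker (LinearMap.lsmul R N x)) ∧
      ((∀ j, ExtFinite (ModuleCat.of R (R ⧸ 𝔞)) j (LinearMap.ker (LinearMap.lsmul R N x))) →
        ∀ j, ExtFinite (ModuleCat.of R (R ⧸ 𝔞)) j (N ⧸ LinearMap.range (LinearMap.lsmul R N x))))
    (hN : P N) (j : ℕ) : ExtFinite (ModuleCat.of R (R ⧸ 𝔞)) j N := by
  obtain ⟨I, hI⟩ : ∃ I, I = Module.annihilator R N := ⟨_, rfl⟩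
  induction I using WellFoundedGT.induction generalizing N j with
  | ind I ih =>
    subst hI
    by_cases hle : 𝔞 ≤ Module.annihilator R N
    · have htop : Submodule.torsionBySet R N 𝔞 = ⊤ := eq_top_iff.2 fun y _ ↦
        (Submodule.mem_torsionBySet_iff _ _).2 fun a ↦ Module.mem_annihilator.1 (hle a.2) y
      have : Module.Finite R N := ⟨htop ▸ (extFinite_zero_iff 𝔞).1 (hzero N hN)⟩
      exact ExtFinite.of_finite
    · obtain ⟨x, ⟨hx, hPker, hcoker⟩, hxN⟩ :=
        ((eventually_mem_genericFilter.and (hstep N hN)).and_frequently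
          (frequently_notMem_genericFilter hle)).exists
      have hlt : Module.annihilator R N <
          Module.annihilator R (LinearMap.ker (LinearMap.lsmul R N x)) :=
        lt_of_le_of_ne (LinearMap.annihilator_le_of_injective _ (Submodule.injective_subtype _))
          fun heq ↦ hxN <| heq ▸ Module.mem_annihilator.2 fun y ↦ Subtype.ext y.2
      have hker (j : ℕ) := ih _ hlt hPker j rfl
      refine ExtFinite.of_ker_coker ?_ (fun i _ ↦ hker i) (fun i _ ↦ hcoker hker i)
      rw [extMap_lsmul]
      exact LinearMap.ext (smul_ext_quotient_eq_zero 𝔞 hx _ j)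

lemma IsTorsionIdeal.extFinite_of_support_isMaximal (hN : IsTorsionIdeal 𝔞 N)
    (hs : ∀ p ∈ Module.support R N, p.asIdeal.IsMaximal)
    (h0 : ExtFinite (ModuleCat.of R (R ⧸ 𝔞)) 0 N) (j : ℕ) :
    ExtFinite (ModuleCat.of R (R ⧸ 𝔞)) j N := by
  refine extFinite_of_eventually_ker_coker (P := fun N _ _ ↦ IsTorsionIdeal 𝔞 N ∧
    (∀ p ∈ Module.support R N, p.asIdeal.IsMaximal) ∧
    ExtFinite (ModuleCat.of R (R ⧸ 𝔞)) 0 N) (fun N _ _ h ↦ h.2.2) ?_ ⟨hN, hs, h0⟩ j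
  rintro N _ _ ⟨hN, hs, h0⟩
  filter_upwards [hN.eventually_finite_coker hs ((extFinite_zero_iff 𝔞).1 h0)] with x hfin
  have hinj := (LinearMap.ker (LinearMap.lsmul R N x)).injective_subtype
  exact ⟨⟨hN.of_injective hinj,
    fun p hp ↦ hs p (Module.support_subset_of_injective _ hinj hp), h0.of_injective hinj⟩,
    fun _ _ ↦
      have := hfin
      ExtFinite.of_finite⟩

lemma IsTorsionIdeal.extFinite_of_moduleDim_le_one (hN : IsTorsionIdeal 𝔞 N)
    (hdim : moduleDim R N ≤ 1) (h0 : ExtFinite (ModuleCat.of R (R ⧸ 𝔞)) 0 N)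
    (h1 : ExtFinite (ModuleCat.of R (R ⧸ 𝔞)) 1 N) (j : ℕ) :
    ExtFinite (ModuleCat.of R (R ⧸ 𝔞)) j N := by
  let P (N : Type u) [AddCommGroup N] [Module R N] : Prop := IsTorsionIdeal 𝔞 N ∧
    moduleDim R N ≤ 1 ∧ ExtFinite (ModuleCat.of R (R ⧸ 𝔞)) 0 N ∧
    ExtFinite (ModuleCat.of R (R ⧸ 𝔞)) 1 N
  have hP : P N := ⟨hN, hdim, h0, h1⟩
  refine extFinite_of_eventually_ker_coker (P := P) (fun N _ _ h ↦ h.2.2.1) ?_ hP j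
  rintro N _ _ ⟨hN, hdim, h0, h1⟩
  filter_upwards [hN.eventually_exists_fg_support_quotient_isMaximal hdim
    ((extFinite_zero_iff 𝔞).1 h0)] with x ⟨L, hL, hmax⟩
  have hinj := (LinearMap.ker (LinearMap.lsmul R N x)).injective_subtype
  refine ⟨⟨hN.of_injective hinj, (moduleDim_le_of_injective _ hinj).trans hdim,
    h0.of_injective hinj, h1.ker_one h0⟩, fun hker j ↦ (ExtFinite.quotient_iff hL).1 ?_⟩
  have htors := (hN.of_surjective (Submodule.mkQ_surjective _)).of_surjective L.mkQ_surjective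
  exact htors.extFinite_of_support_isMaximal hmax
    ((ExtFinite.quotient_iff hL).2 ((hker 2).coker h1 h0)) j

lemma MemFD.extFinite (hFD : MemFD R 1 N) (hN : IsTorsionIdeal 𝔞 N)
    (h0 : ExtFinite (ModuleCat.of R (R ⧸ 𝔞)) 0 N) (h1 : ExtFinite (ModuleCat.of R (R ⧸ 𝔞)) 1 N)
    (j : ℕ) : ExtFinite (ModuleCat.of R (R ⧸ 𝔞)) j N := by
  obtain ⟨L, hL, hdim⟩ := hFD
  rw [← ExtFinite.quotient_iff hL] at h0 h1 ⊢
  exact (hN.of_surjective L.mkQ_surjective).extFinite_of_moduleDim_le_one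
    (by exact_mod_cast hdim) h0 h1 j

end Cofinite

section MemFD

variable {R : Type u} [CommRing R] {A B : Type u} [AddCommGroup A] [Module R A] [AddCommGroup B]
  [Module R B] {n : ℕ}

lemma MemFD.of_equiv (e : A ≃ₗ[R] B) (hA : MemFD R n A) : MemFD R n B := by
  obtain ⟨L, hL, hdim⟩ := hA
  let e' := Submodule.Quotient.equiv L (L.map e.toLinearMap) e rfl
  exact ⟨L.map e.toLinearMap, hL.map _,
    (moduleDim_le_of_injective e'.symm.toLinearMap e'.symm.injective).trans hdim⟩

lemma MemFD.of_moduleDim_le (hA : moduleDim R A ≤ n) : MemFD R n A :=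
  let e := Submodule.quotEquivOfEqBot (⊥ : Submodule R A) rfl
  ⟨⊥, Submodule.fg_bot, (moduleDim_le_of_injective e.toLinearMap e.injective).trans hA⟩

lemma moduleDim_le_of_forall_notMem_minimalPrimes (hR : ringKrullDim R ≤ n + 1)
    (hA : ∀ q ∈ Module.support R A, q.asIdeal ∉ minimalPrimes R) : moduleDim R A ≤ n := by
  refine iSup_le fun s ↦ ?_
  obtain ⟨q, hq, hle⟩ := Ideal.exists_minimalPrimes_le (I := ⊥) (J := s.head.1.asIdeal) bot_le
  have hlt : (⟨q, hq.1.1⟩ : PrimeSpectrum R) < s.head.1 :=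
    lt_of_le_of_ne hle fun h ↦ hA _ s.head.2 (h ▸ hq)
  let s' : LTSeries (PrimeSpectrum R) := s.map Subtype.val fun _ _ h ↦ h
  have hlen : (s'.cons ⟨q, hq.1.1⟩ hlt).length = s.length + 1 := RelSeries.cons_length s' _ hlt
  have hle' := (Order.LTSeries.length_le_krullDim (s'.cons ⟨q, hq.1.1⟩ hlt)).trans hR
  rw [hlen] at hle'
  have : s.length + 1 ≤ n + 1 := by exact_mod_cast hle'
  exact_mod_cast Nat.le_of_succ_le_succ this

lemma exists_pow_mul_eq_bot [IsNoetherianRing R] (𝔞 : Ideal R) :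
    ∃ (k : ℕ) (J : Ideal R), 𝔞 ^ k * J = ⊥ ∧ ∀ p ∈ minimalPrimes R, 𝔞 ≤ p → ¬ J ≤ p := by
  classical
  have hfin := minimalPrimes.finite_of_isNoetherianRing R
  let J : Ideal R := (hfin.toFinset.filter (¬ 𝔞 ≤ ·)).inf id
  have hJ : 𝔞 * J ≤ (⊥ : Ideal R).radical := by
    rw [← Ideal.sInf_minimalPrimes]
    refine le_sInf fun p hp ↦ ?_
    by_cases h : 𝔞 ≤ p
    · exact Ideal.mul_le_left.trans h
    · exact Ideal.mul_le_right.trans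
        (Finset.inf_le (f := id) (Finset.mem_filter.2 ⟨hfin.mem_toFinset.2 hp, h⟩))
  obtain ⟨k, hk⟩ := (⊥ : Ideal R).exists_radical_pow_le_of_fg (IsNoetherian.noetherian _)
  refine ⟨k, J ^ k, ?_, fun p hp hap hJp ↦ ?_⟩
  · rw [← mul_pow, ← le_bot_iff]
    exact (Ideal.pow_right_mono hJ k).trans hk
  · obtain ⟨q, hq, hqp⟩ := hp.1.1.inf_le'.1 (hp.1.1.le_of_pow_le hJp)
    obtain ⟨hq, haq⟩ := Finset.mem_filter.1 hq
    exact haq (hap.trans (hp.2 (hfin.mem_toFinset.1 hq).1 hqp))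

lemma MemFD.of_ringKrullDim_le [IsNoetherianRing R] {𝔞 : Ideal R} (hR : ringKrullDim R ≤ n + 1)
    (hA : IsTorsionIdeal 𝔞 A) (hT : (Submodule.torsionBySet R A 𝔞).FG) : MemFD R n A := by
  obtain ⟨k, J, hJ, hmin⟩ := exists_pow_mul_eq_bot 𝔞
  let T := Submodule.torsionBySet R A ↑(𝔞 ^ k)
  refine ⟨T, fg_torsionBySet_pow hT k,
    moduleDim_le_of_forall_notMem_minimalPrimes hR fun q hq hqmin ↦ hmin q.asIdeal hqmin
      ((hA.of_surjective T.mkQ_surjective).support_subset_zeroLocus hq) ?_⟩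
  refine le_trans (fun b hb ↦ Module.mem_annihilator.2 fun y ↦ ?_)
    (Module.annihilator_le_of_mem_support hq)
  obtain ⟨y, rfl⟩ := T.mkQ_surjective y
  refine (Submodule.Quotient.mk_eq_zero T).2 <| (Submodule.mem_torsionBySet_iff _ _).2 fun a ↦ ?_
  have hab : (a : R) * b = 0 := Ideal.mem_bot.1 (hJ ▸ Ideal.mul_mem_mul a.2 hb)
  rw [smul_smul, hab, zero_smul]

end MemFD

section Induction

variable {R : Type u} [CommRing R] [IsNoetherianRing R] {𝔞 : Ideal R}
  {A : Type u} [AddCommGroup A] [Module R A]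

lemma ExtFinite.primaryComponent_one (hA : ExtFinite (ModuleCat.of R (R ⧸ 𝔞)) 1 A) :
    ExtFinite (ModuleCat.of R (R ⧸ 𝔞)) 1 (Ideal.primaryComponent A 𝔞) := by
  refine left (LinearMap.exact_subtype_mkQ _) (Ideal.primaryComponent A 𝔞).injective_subtype
    (Ideal.primaryComponent A 𝔞).mkQ_surjective ((extFinite_zero_iff 𝔞).2 ?_) hA
  rw [eq_bot_iff.2 (torsionBySet_le_primaryComponent.trans
    (primaryComponent_quotient_primaryComponent (IsNoetherian.noetherian 𝔞)).le)]
  exact Submodule.fg_bot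

namespace LocalCohomologyLimit

lemma extFinite_zero_zero (hA : ExtFinite (ModuleCat.of R (R ⧸ 𝔞)) 0 A) :
    ExtFinite (ModuleCat.of R (R ⧸ 𝔞)) 0 (LocalCohomologyLimit 𝔞 0 (ModuleCat.of R A)) :=
  (hA.of_injective (Ideal.primaryComponent A 𝔞).injective_subtype).of_equiv (zeroEquiv 𝔞 A).symm

lemma extFinite_one_zero (hA : ExtFinite (ModuleCat.of R (R ⧸ 𝔞)) 1 A) :
    ExtFinite (ModuleCat.of R (R ⧸ 𝔞)) 1 (LocalCohomologyLimit 𝔞 0 (ModuleCat.of R A)) :=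
  hA.primaryComponent_one.of_equiv (zeroEquiv 𝔞 A).symm

variable (𝔞 A) in
/-- In positive degrees, local cohomology does not see the `𝔞`-torsion submodule. -/
noncomputable def succEquivQuotientPrimaryComponent (i : ℕ) :
    LocalCohomologyLimit 𝔞 (i + 1) (ModuleCat.of R A) ≃ₗ[R]
      LocalCohomologyLimit 𝔞 (i + 1) (ModuleCat.of R (A ⧸ Ideal.primaryComponent A 𝔞)) :=
  have := subsingleton_of_isTorsionIdeal i (isTorsionIdeal_primaryComponent 𝔞 A)
  have := subsingleton_of_isTorsionIdeal (i + 1) (isTorsionIdeal_primaryComponent 𝔞 A)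
  .ofBijective _ <| map_bijective 𝔞 (LinearMap.exact_subtype_mkQ _)
    (Ideal.primaryComponent A 𝔞).injective_subtype (Ideal.primaryComponent A 𝔞).mkQ_surjective

/-- Induction on `t`: the dimension shift replaces `A` by a module `L` with
`H^i_𝔞(L) ≃ H^{i+1}_𝔞(A)`. -/
lemma extFinite_of_memFD (t : ℕ) (hA : ∀ j ≤ t + 1, ExtFinite (ModuleCat.of R (R ⧸ 𝔞)) j A)
    (hFD : ∀ i < t,
      ExtFinite (ModuleCat.of R (R ⧸ 𝔞)) 0 (LocalCohomologyLimit 𝔞 i (ModuleCat.of R A)) →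
      MemFD R 1 (LocalCohomologyLimit 𝔞 i (ModuleCat.of R A))) :
    (∀ i < t, ∀ j,
      ExtFinite (ModuleCat.of R (R ⧸ 𝔞)) j (LocalCohomologyLimit 𝔞 i (ModuleCat.of R A))) ∧
    ExtFinite (ModuleCat.of R (R ⧸ 𝔞)) 0 (LocalCohomologyLimit 𝔞 t (ModuleCat.of R A)) ∧
    ExtFinite (ModuleCat.of R (R ⧸ 𝔞)) 1 (LocalCohomologyLimit 𝔞 t (ModuleCat.of R A)) := by
  induction t generalizing A with
  | zero =>
    exact ⟨by simp, extFinite_zero_zero (hA 0 zero_le_one), extFinite_one_zero (hA 1 le_rfl)⟩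
  | succ t ih =>
    have h0 := extFinite_zero_zero (hA 0 (Nat.zero_le _))
    have hzero := (hFD 0 t.succ_pos h0).extFinite (isTorsionIdeal 𝔞 0 _) h0
      (extFinite_one_zero (hA 1 (Nat.le_add_left _ _)))
    have hquot (j : ℕ) (hj : j ≤ t + 2) :
        ExtFinite (ModuleCat.of R (R ⧸ 𝔞)) j (A ⧸ Ideal.primaryComponent A 𝔞) :=
      .right (LinearMap.exact_subtype_mkQ _) (Ideal.primaryComponent A 𝔞).injective_subtype
        (Ideal.primaryComponent A 𝔞).mkQ_surjective (hA j hj)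
        ((hzero (j + 1)).of_equiv (zeroEquiv 𝔞 A))
    obtain ⟨L, hL, hextL⟩ := exists_equiv_succ
      (primaryComponent_quotient_primaryComponent (A := A) (IsNoetherian.noetherian 𝔞))
    have e (i : ℕ) :
        LocalCohomologyLimit 𝔞 i L ≃ₗ[R] LocalCohomologyLimit 𝔞 (i + 1) (ModuleCat.of R A) :=
      (hL i).some ≪≫ₗ (succEquivQuotientPrimaryComponent 𝔞 A i).symm
    obtain ⟨hlt, hL0, hL1⟩ := ih (A := L)
      (fun j hj ↦ hextL j (hquot (j + 1) (Nat.succ_le_succ hj)))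
      fun i hi h ↦ (hFD (i + 1) (Nat.succ_lt_succ hi) (h.of_equiv (e i))).of_equiv (e i).symm
    refine ⟨fun i hi j ↦ ?_, hL0.of_equiv (e t), hL1.of_equiv (e t)⟩
    cases i with
    | zero => exact hzero j
    | succ i => exact (hlt i (Nat.lt_of_succ_lt_succ hi) j).of_equiv (e i)

end LocalCohomologyLimit

end Induction

section LocalCohomology

variable {R : Type u} [CommRing R] {𝔞 : Ideal R} {M : ModuleCat.{u} R} {i : ℕ}

lemma isTorsionIdeal_localCohomology : IsTorsionIdeal 𝔞 ((localCohomology 𝔞 i).obj M) :=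
  (LocalCohomologyLimit.isTorsionIdeal 𝔞 i M).of_injective
    (localCohomologyEquivLimit 𝔞 i M).injective

lemma finite_extIdeal_iff : Module.Finite R (extIdeal 𝔞 i M) ↔
    ExtFinite (ModuleCat.of R (R ⧸ 𝔞)) i M :=
  Module.Finite.equiv_iff (extObjEquiv (ModuleCat.of R (R ⧸ 𝔞)) M i)

lemma finite_quotientHom_iff : Module.Finite R ((R ⧸ 𝔞) →ₗ[R] M) ↔
    ExtFinite (ModuleCat.of R (R ⧸ 𝔞)) 0 M :=
  (Module.Finite.equiv_iff (quotientHomEquivTorsionBySet M 𝔞)).trans <|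
    Module.Finite.iff_fg.trans (extFinite_zero_iff 𝔞).symm

end LocalCohomology

theorem localCohomology_isCofinite_of_memFD_one_general
    {R : Type u} [CommRing R] [IsNoetherianRing R] (𝔞 : Ideal R) (t : ℕ) (M : ModuleCat.{u} R)
    (hext : ∀ i ≤ t + 1, Module.Finite R (extIdeal 𝔞 i M))
    (h : (∀ i < t, MemFD R 1 ((localCohomology 𝔞 i).obj M)) ∨ ringKrullDim R ≤ 2) :
    (∀ i < t, IsCofinite 𝔞 ((localCohomology 𝔞 i).obj M)) ∧
      Module.Finite R ((R ⧸ 𝔞) →ₗ[R] ((localCohomology 𝔞 t).obj M)) ∧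
      Module.Finite R (extIdeal 𝔞 1 ((localCohomology 𝔞 t).obj M)) := by
  have e (i : ℕ) := localCohomologyEquivLimit 𝔞 i M
  have hFD (i : ℕ) (hi : i < t)
      (h0 : ExtFinite (ModuleCat.of R (R ⧸ 𝔞)) 0 (LocalCohomologyLimit 𝔞 i M)) :
      MemFD R 1 (LocalCohomologyLimit 𝔞 i M) := by
    rcases h with h | h
    · exact (h i hi).of_equiv (e i)
    · exact .of_ringKrullDim_le (h.trans (by norm_num))
        (LocalCohomologyLimit.isTorsionIdeal 𝔞 i M) ((extFinite_zero_iff 𝔞).1 h0)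
  obtain ⟨hlt, h0, h1⟩ := LocalCohomologyLimit.extFinite_of_memFD (A := M) t
    (fun j hj ↦ finite_extIdeal_iff.1 (hext j hj)) hFD
  exact ⟨fun i hi ↦ ⟨isTorsionIdeal_localCohomology.support_subset_zeroLocus,
      fun j ↦ finite_extIdeal_iff.2 ((hlt i hi j).of_equiv (e i).symm)⟩,
    finite_quotientHom_iff.2 (h0.of_equiv (e t).symm),
    finite_extIdeal_iff.2 (h1.of_equiv (e t).symm)⟩

/-- Yang–Shen, Proposition 4.1(2) (module case): let `𝔞` be a proper ideal of a noetherian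
ring `R`, `t ≥ 0`, and `M` an `R`-module with `Ext^i_R(R/𝔞, M)` finitely generated for all `i`.
If `H^i_𝔞(M) ∈ FD_{≤1}` for all `i < t` (in particular if `dim_R H^i_𝔞(M) ≤ 1` for all `i < t`,
or if `dim R = 2`), then `H^i_𝔞(M)` is `𝔞`-cofinite for all `i < t` and both
`Hom_R(R/𝔞, H^t_𝔞(M))` and `Ext^1_R(R/𝔞, H^t_𝔞(M))` are finitely generated. -/
theorem localCohomology_isCofinite_of_memFD_one
    {R : Type u} [CommRing R] [IsNoetherianRing R] (𝔞 : Ideal R) (ha : 𝔞 ≠ ⊤) (t : ℕ)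
    (M : ModuleCat.{u} R) (hext : ∀ i : ℕ, Module.Finite R (extIdeal 𝔞 i M))
    (h : (∀ i : ℕ, i < t → MemFD R 1 ((localCohomology 𝔞 i).obj M)) ∨
      (∀ i : ℕ, i < t → moduleDim R ((localCohomology 𝔞 i).obj M) ≤ 1) ∨
      ringKrullDim R = 2) :
    (∀ i : ℕ, i < t → IsCofinite 𝔞 ((localCohomology 𝔞 i).obj M)) ∧
      Module.Finite R ((R ⧸ 𝔞) →ₗ[R] ((localCohomology 𝔞 t).obj M)) ∧
      Module.Finite R (extIdeal 𝔞 1 ((localCohomology 𝔞 t).obj M)) :=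
  localCohomology_isCofinite_of_memFD_one_general 𝔞 t M (fun i _ ↦ hext i) <|
    h.elim .inl <| Or.imp (fun hdim i hi ↦ .of_moduleDim_le (mod_cast hdim i hi)) Eq.le
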